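/- arXiv:math/0108043 — 5 statements merged into one kernel-verified Lean document; each statement's English description precedes it below -/
import Mathlib

section
/- Let x ∈ ℝ with 0 < x < 1/4 and let E ∈ ℝ. Define a sequence of real numbers by r_0 = E and r_{m+1} = 1/(1 − x·r_m). Assume that 1 − x·r_m ≠ 0 for every m ≥ 0, and that E ≠ (1 + √(1−4x))/(2x). Then the sequence r_m converges, as m → ∞, to (1 − √(1−4x))/(2x). -/
open Filter

/-- For `0 < x < 1/4`, the continued-fraction iterates
`r 0 = E`, `r (m+1) = 1/(1 - x·r m)` converge to `(1 - √(1-4x))/(2x)`, provided all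
denominators are nonzero and `E` is not the other fixed point `(1 + √(1-4x))/(2x)`. -/
theorem stmt2 (x E : ℝ) (hx0 : 0 < x) (hx1 : x < 1 / 4)
    (r : ℕ → ℝ) (hr0 : r 0 = E)
    (hrsucc : ∀ m : ℕ, r (m + 1) = 1 / (1 - x * r m))
    (hne : ∀ m : ℕ, 1 - x * r m ≠ 0)
    (hE : E ≠ (1 + Real.sqrt (1 - 4 * x)) / (2 * x)) :
    Tendsto r atTop (nhds ((1 - Real.sqrt (1 - 4 * x)) / (2 * x))) := by
  set s := Real.sqrt (1 - 4 * x) with hs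
  have hs2 : s ^ 2 = 1 - 4 * x := Real.sq_sqrt (by linarith)
  have hspos : 0 < s := Real.sqrt_pos.mpr (by linarith)
  have hs1 : s < 1 := by nlinarith
  obtain ⟨a, ha⟩ : ∃ a, a = (1 - s) / (2 * x) := ⟨_, rfl⟩
  obtain ⟨b, hb⟩ : ∃ b, b = (1 + s) / (2 * x) := ⟨_, rfl⟩
  rw [← ha]
  rw [← hb] at hE
  have hapos : 0 < a := by rw [ha]; apply div_pos <;> linarith
  have hab : a < b := by rw [ha, hb]; gcongr; linarith
  have hsum : x * (a + b) = 1 := by rw [ha, hb]; field_simp; ring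
  have hprod : x * (a * b) = 1 := by
    rw [ha, hb]; field_simp; linarith
  clear_value s
  have hbpos : 0 < b := hapos.trans hab
  have hda : ∀ m, r (m + 1) - a = x * a * (r m - a) / (1 - x * r m) := by
    intro m
    have := hne m
    rw [hrsucc, eq_div_iff this, sub_mul, one_div, inv_mul_cancel₀ this]
    linear_combination (a) * hsum - hprod
  have hdb : ∀ m, r (m + 1) - b = x * b * (r m - b) / (1 - x * r m) := by
    intro m
    have := hne m
    rw [hrsucc, eq_div_iff this, sub_mul, one_div, inv_mul_cancel₀ this]
    linear_combination (b) * hsum - hprod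
  have hrb : ∀ m, r m - b ≠ 0 := by
    intro m
    induction m with
    | zero => rw [hr0]; exact sub_ne_zero.mpr hE
    | succ m ih =>
      rw [hdb]
      exact div_ne_zero (mul_ne_zero (mul_pos hx0 hbpos).ne' ih) (hne m)
  have ht : ∀ m, (r m - a) / (r m - b) = (a / b) ^ m * ((E - a) / (E - b)) := by
    intro m
    induction m with
    | zero => simp [hr0]
    | succ m ih =>
      rw [pow_succ', mul_assoc, ← ih, hda, hdb]
      have h1 := hne m
      have h2 := hrb m
      field_simp
  have hlim : Tendsto (fun m => (r m - a) / (r m - b)) atTop (nhds 0) := by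
    simp_rw [ht]
    have := (tendsto_pow_atTop_nhds_zero_of_lt_one (div_pos hapos hbpos).le
      ((div_lt_one hbpos).mpr hab)).mul_const ((E - a) / (E - b))
    simpa using this
  have hr : ∀ m, r m = (a - b * ((r m - a) / (r m - b))) / (1 - (r m - a) / (r m - b)) := by
    intro m
    have h2 := hrb m
    have h3 : 1 - (r m - a) / (r m - b) = (a - b) / (r m - b) := by
      field_simp; ring
    have h4 : a - b ≠ 0 := sub_ne_zero.mpr hab.ne
    rw [h3]
    field_simp
    ring
  have h5 := ((hlim.const_mul b).const_sub a).div (hlim.const_sub 1) (by norm_num)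
  simp only [mul_zero, sub_zero, div_one] at h5
  exact h5.congr (fun m => (hr m).symm)
end

section
/- Let k ≥ 2 and let T' be a finite set of patterns in S_{k−1}. For each τ' ∈ T' let τ'⁺ ∈ S_k be the pattern obtained by appending k at the end, i.e. τ'⁺(i) = τ'(i) for i < k and τ'⁺(k) = k, and set T = {τ'⁺ : τ' ∈ T'}. Let F_T(X) = Σ_{n≥0} |{π ∈ S_n : π avoids 132 and every pattern in T}|·Xⁿ and F_{T'}(X) = Σ_{n≥0} |{π ∈ S_n : π avoids 132 and every pattern in T'}|·Xⁿ, as formal power series in ℚ⟦X⟧. Then F_T(X)·(1 − X·F_{T'}(X)) = 1. -/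
/-- A pattern is a permutation of `{1,…,k}` for some `k`. -/
def Pattern : Type := Σ k : ℕ, Equiv.Perm (Fin k)

/-- `IsOccurrence τ π f` says that the strictly increasing tuple of indices `f` is an
occurrence of the pattern `τ` in the permutation `π`, i.e. `π ∘ f` is order-isomorphic
to `τ`. -/
def IsOccurrence {k n : ℕ} (τ : Equiv.Perm (Fin k)) (π : Equiv.Perm (Fin n))
    (f : Fin k → Fin n) : Prop :=
  StrictMono f ∧ ∀ a b : Fin k, τ a < τ b ↔ π (f a) < π (f b)

/-- `π` contains the pattern `τ` (at least once). -/
def Contains {k n : ℕ} (τ : Equiv.Perm (Fin k)) (π : Equiv.Perm (Fin n)) : Prop :=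
  ∃ f : Fin k → Fin n, IsOccurrence τ π f

/-- `π` contains the pattern `τ` exactly once. -/
def ContainsOnce {k n : ℕ} (τ : Equiv.Perm (Fin k)) (π : Equiv.Perm (Fin n)) : Prop :=
  ∃! f : Fin k → Fin n, IsOccurrence τ π f

/-- `π` avoids every pattern in the set `T`. -/
def AvoidsSet {n : ℕ} (T : Set Pattern) (π : Equiv.Perm (Fin n)) : Prop :=
  ∀ p ∈ T, ¬ Contains p.2 π

/-- `f_T(n)`: the number of permutations of `{1,…,n}` avoiding every pattern in `T`. -/
noncomputable def avoidCount (T : Set Pattern) (n : ℕ) : ℕ :=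
  Nat.card {π : Equiv.Perm (Fin n) // AvoidsSet T π}

/-- The pattern `132 ∈ S₃` (zero-indexed: `0 ↦ 0, 1 ↦ 2, 2 ↦ 1`). -/
noncomputable def p132 : Equiv.Perm (Fin 3) := Equiv.ofBijective ![0, 2, 1] (by decide)

open PowerSeries

/-- Append a largest fixed point at the end: `appendTop τ` agrees with `τ` on the first
`m` letters and sends the last letter `m+1` to itself. -/
noncomputable def appendTop {m : ℕ} (τ : Equiv.Perm (Fin m)) : Equiv.Perm (Fin (m + 1)) :=
  finSuccEquivLast.symm.permCongr τ.optionCongr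

theorem appendTop_castSucc {m : ℕ} (τ : Equiv.Perm (Fin m)) (a : Fin m) :
    appendTop τ a.castSucc = (τ a).castSucc := by
  simp [appendTop, Equiv.permCongr_apply]

theorem appendTop_last {m : ℕ} (τ : Equiv.Perm (Fin m)) :
    appendTop τ (Fin.last m) = Fin.last m := by
  simp [appendTop, Equiv.permCongr_apply]

theorem contains132_iff {n : ℕ} (π : Equiv.Perm (Fin n)) :
    Contains p132 π ↔ ∃ a b c, a < b ∧ b < c ∧ π a < π c ∧ π c < π b := by
  have h0 : p132 0 = 0 := rfl
  have h1 : p132 1 = 2 := rfl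
  have h2 : p132 2 = 1 := rfl
  constructor
  · rintro ⟨f, hf, h⟩
    refine ⟨f 0, f 1, f 2, hf (by decide), hf (by decide), ?_, ?_⟩
    · rw [← h, h0, h2]; decide
    · rw [← h, h1, h2]; decide
  · rintro ⟨a, b, c, hab, hbc, hac, hcb⟩
    refine ⟨![a, b, c], ?_, ?_⟩
    · rw [Fin.strictMono_iff_lt_succ]
      intro x
      fin_cases x
      · exact hab
      · exact hbc
    · intro x y
      have e1 := hac.trans hcb
      fin_cases x <;> fin_cases y <;> simp [h0, h1, h2, hac, hcb, e1, hac.le, hcb.le, e1.le]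

def glueFun {i j : ℕ} (σ : Equiv.Perm (Fin i)) (ρ : Equiv.Perm (Fin j))
    (p : Fin (i + j + 1)) : Fin (i + j + 1) :=
  if h : p.val < i then ⟨j + (σ ⟨p, h⟩).val, by have := (σ ⟨p, h⟩).isLt; omega⟩
  else if h' : p.val = i then ⟨i + j, by omega⟩
  else ⟨(ρ ⟨p.val - i - 1, by have := p.isLt; omega⟩).val, by
    have := (ρ ⟨p.val - i - 1, by have := p.isLt; omega⟩).isLt; omega⟩

theorem glueFun_inj {i j : ℕ} (σ : Equiv.Perm (Fin i)) (ρ : Equiv.Perm (Fin j)) :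
    Function.Injective (glueFun σ ρ) := by
  intro p q h
  have h := congrArg Fin.val h
  unfold glueFun at h
  apply Fin.ext
  split_ifs at h with h1 h2 h3 h4 h5 h6 h7 h8 <;> dsimp only at h
  · have : σ ⟨p, h1⟩ = σ ⟨q, h2⟩ := Fin.ext (by omega)
    have := congrArg Fin.val (σ.injective this)
    exact this
  · have := (σ ⟨p, h1⟩).isLt; omega
  · have := (ρ ⟨q.val - i - 1, by have := q.isLt; omega⟩).isLt; omega
  · have := (σ ⟨q, by assumption⟩).isLt; omega
  · omega
  · have := (ρ ⟨q.val - i - 1, by have := q.isLt; omega⟩).isLt; omega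
  · have := (ρ ⟨p.val - i - 1, by have := p.isLt; omega⟩).isLt; omega
  · have := (ρ ⟨p.val - i - 1, by have := p.isLt; omega⟩).isLt; omega
  · have := congrArg Fin.val (ρ.injective (Fin.ext h))
    dsimp only at this
    omega

noncomputable def glue {i j : ℕ} (σ : Equiv.Perm (Fin i)) (ρ : Equiv.Perm (Fin j)) :
    Equiv.Perm (Fin (i + j + 1)) :=
  Equiv.ofBijective (glueFun σ ρ) (Finite.injective_iff_bijective.mp (glueFun_inj σ ρ))

section
variable {i j : ℕ} (σ : Equiv.Perm (Fin i)) (ρ : Equiv.Perm (Fin j))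

theorem glue_lt (p : Fin (i + j + 1)) (h : p.val < i) :
    (glue σ ρ p).val = j + (σ ⟨p, h⟩).val := by
  simp [glue, glueFun, h]

theorem glue_mid (p : Fin (i + j + 1)) (h : p.val = i) : (glue σ ρ p).val = i + j := by
  simp [glue, glueFun, h]

theorem glue_gt (p : Fin (i + j + 1)) (h : i < p.val) (h' : p.val - i - 1 < j) :
    (glue σ ρ p).val = (ρ ⟨p.val - i - 1, h'⟩).val := by
  simp [glue, glueFun, h.not_gt, h.ne']

theorem glue_gt_lt (p : Fin (i + j + 1)) : i < p.val ↔ (glue σ ρ p).val < j := by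
  rcases lt_trichotomy p.val i with h | h | h
  · rw [glue_lt σ ρ p h]; omega
  · rw [glue_mid σ ρ p h]; omega
  · have h' : p.val - i - 1 < j := by have := p.isLt; omega
    rw [glue_gt σ ρ p h h']
    have := (ρ ⟨p.val - i - 1, h'⟩).isLt
    omega

theorem contains_left {k : ℕ} {τ : Equiv.Perm (Fin k)} (h : Contains τ σ) :
    ∃ f, IsOccurrence τ (glue σ ρ) f ∧ ∀ a, (f a).val < i := by
  obtain ⟨f, hf, h⟩ := h
  refine ⟨fun a => ⟨(f a).val, by have := (f a).isLt; omega⟩, ⟨fun a b hab => hf hab, ?_⟩,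
    fun a => (f a).isLt⟩
  intro a b
  rw [h, Fin.lt_def, Fin.lt_def, glue_lt σ ρ _ (f a).isLt, glue_lt σ ρ _ (f b).isLt]
  simp

theorem contains_right {k : ℕ} {τ : Equiv.Perm (Fin k)} (h : Contains τ ρ) :
    Contains τ (glue σ ρ) := by
  obtain ⟨f, hf, h⟩ := h
  have hv : ∀ a, (glue σ ρ ⟨i + 1 + (f a).val, by have := (f a).isLt; omega⟩).val
      = (ρ (f a)).val := by
    intro a
    have e : i + 1 + (f a).val - i - 1 = (f a).val := by omega
    rw [glue_gt σ ρ _ (by dsimp only; omega) (by have := (f a).isLt; dsimp only; omega)]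
    simp only [e]
  refine ⟨fun a => ⟨i + 1 + (f a).val, by have := (f a).isLt; omega⟩, ?_, ?_⟩
  · intro a b hab
    have := hf hab
    rw [Fin.lt_def] at this ⊢
    dsimp only
    omega
  · intro a b
    rw [h, Fin.lt_def, Fin.lt_def, hv, hv]

theorem restrict_left {k : ℕ} {τ : Equiv.Perm (Fin k)} {f : Fin k → Fin (i + j + 1)}
    (hm : StrictMono f) (h : ∀ a b, τ a < τ b ↔ glue σ ρ (f a) < glue σ ρ (f b))
    (hf : ∀ a, (f a).val < i) : Contains τ σ := by
  refine ⟨fun a => ⟨(f a).val, hf a⟩, fun a b hab => hm hab, ?_⟩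
  intro a b
  rw [h, Fin.lt_def, Fin.lt_def, glue_lt σ ρ _ (hf a), glue_lt σ ρ _ (hf b)]
  simp

theorem restrict_right {k : ℕ} {τ : Equiv.Perm (Fin k)} {f : Fin k → Fin (i + j + 1)}
    (hm : StrictMono f) (h : ∀ a b, τ a < τ b ↔ glue σ ρ (f a) < glue σ ρ (f b))
    (hf : ∀ a, i < (f a).val) : Contains τ ρ := by
  have hl : ∀ a, (f a).val - i - 1 < j := fun a => by
    have := (f a).isLt; have := hf a; omega
  refine ⟨fun a => ⟨(f a).val - i - 1, hl a⟩, ?_, ?_⟩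
  · intro a b hab
    have := hm hab
    have := hf a
    rw [Fin.lt_def] at *
    dsimp only
    omega
  · intro a b
    rw [h, Fin.lt_def, Fin.lt_def, glue_gt σ ρ _ (hf a) (hl a), glue_gt σ ρ _ (hf b) (hl b)]

theorem glue_le (p : Fin (i + j + 1)) : (glue σ ρ p).val ≤ i + j := by
  have := (glue σ ρ p).isLt; omega

theorem glue_132 : Contains p132 (glue σ ρ) ↔ Contains p132 σ ∨ Contains p132 ρ := by
  constructor
  · intro h
    obtain ⟨f, hf, ho⟩ := h
    have h0 : p132 0 = 0 := rfl
    have h1 : p132 1 = 2 := rfl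
    have h2 : p132 2 = 1 := rfl
    have f01 : f 0 < f 1 := hf (by decide)
    have f12 : f 1 < f 2 := hf (by decide)
    have v02 := (ho 0 2).1 (by rw [h0, h2]; decide)
    have v21 := (ho 2 1).1 (by rw [h1, h2]; decide)
    rw [Fin.lt_def] at f01 f12 v02 v21
    rcases lt_trichotomy (f 2).val i with h | h | h
    · left
      refine restrict_left σ ρ hf ho ?_
      intro a; fin_cases a <;> simp <;> omega
    · have := glue_mid σ ρ _ h
      have := glue_le σ ρ (f 1)
      omega
    · right
      refine restrict_right σ ρ hf ho ?_
      have := (glue_gt_lt σ ρ (f 2)).1 h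
      have := (glue_gt_lt σ ρ (f 0)).2 (by omega)
      intro a; fin_cases a <;> simp <;> omega
  · rintro (h | h)
    · obtain ⟨f, hf, _⟩ := contains_left σ ρ h
      exact ⟨f, hf⟩
    · exact contains_right σ ρ h

theorem glue_top {m : ℕ} (τ : Equiv.Perm (Fin m)) : Contains (appendTop τ) (glue σ ρ) ↔
    Contains τ σ ∨ Contains (appendTop τ) ρ := by
  constructor
  · rintro ⟨f, hf, ho⟩
    by_cases h : i < (f (Fin.last m)).val
    · right
      refine restrict_right σ ρ hf ho ?_
      intro a
      rcases Fin.eq_castSucc_or_eq_last a with ⟨b, rfl⟩ | rfl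
      · have h1 := (glue_gt_lt σ ρ _).1 h
        have h2 := (ho b.castSucc (Fin.last m)).1 (by
          rw [appendTop_castSucc, appendTop_last]; exact Fin.castSucc_lt_last _)
        rw [Fin.lt_def] at h2
        exact (glue_gt_lt σ ρ _).2 (by omega)
      · exact h
    · left
      refine restrict_left σ ρ (f := fun a => f a.castSucc) (fun a b hab => hf (by simpa using hab))
        ?_ ?_
      · intro a b
        rw [← ho, appendTop_castSucc, appendTop_castSucc]
        simp
      · intro a
        have : f a.castSucc < f (Fin.last m) := hf (Fin.castSucc_lt_last _)
        rw [Fin.lt_def] at this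
        omega
  · rintro (h | h)
    · obtain ⟨f, ⟨hm, ho⟩, hl⟩ := contains_left σ ρ h
      have hmid := glue_mid σ ρ ⟨i, by omega⟩ rfl
      have hlt : ∀ a, glue σ ρ (f a) < glue σ ρ ⟨i, by omega⟩ := by
        intro a
        rw [Fin.lt_def, hmid, glue_lt σ ρ _ (hl a)]
        have := (σ ⟨_, hl a⟩).isLt
        omega
      refine ⟨Fin.snoc (α := fun _ => Fin (i + j + 1)) f ⟨i, by omega⟩, ?_, ?_⟩
      · intro a b hab
        rcases Fin.eq_castSucc_or_eq_last a with ⟨a, rfl⟩ | rfl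
        · rcases Fin.eq_castSucc_or_eq_last b with ⟨b, rfl⟩ | rfl
          · simpa using hm (by simpa using hab)
          · simpa [Fin.lt_def] using hl a
        · exact absurd hab (Fin.le_last b).not_gt
      · intro a b
        rcases Fin.eq_castSucc_or_eq_last a with ⟨a, rfl⟩ | rfl
        · rcases Fin.eq_castSucc_or_eq_last b with ⟨b, rfl⟩ | rfl
          · simpa [appendTop_castSucc] using ho a b
          · simpa [appendTop_castSucc, appendTop_last, Fin.castSucc_lt_last] using hlt a
        · rcases Fin.eq_castSucc_or_eq_last b with ⟨b, rfl⟩ | rfl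
          · simp only [appendTop_castSucc, appendTop_last, Fin.snoc_castSucc, Fin.snoc_last]
            exact iff_of_false (Fin.le_last _).not_gt (hlt b).le.not_gt
          · simp
    · exact contains_right σ ρ h

theorem glue_inj {σ' : Equiv.Perm (Fin i)} {ρ' : Equiv.Perm (Fin j)}
    (h : glue σ ρ = glue σ' ρ') : σ = σ' ∧ ρ = ρ' := by
  constructor
  · ext p
    have e := congrArg (fun g => (g ⟨p.val, by have := p.isLt; omega⟩).val) h
    rw [glue_lt σ ρ _ p.isLt, glue_lt σ' ρ' _ p.isLt] at e
    simpa using e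
  · ext p
    have e := congrArg (fun g => (g ⟨i + 1 + p.val, by have := p.isLt; omega⟩).val) h
    have hp : i + 1 + p.val - i - 1 = p.val := by omega
    have hp' := p.isLt
    rw [glue_gt σ ρ _ (by dsimp only; omega) (by dsimp only; omega),
      glue_gt σ' ρ' _ (by dsimp only; omega) (by dsimp only; omega)] at e
    simpa only [hp] using e

end

theorem exists_glue {i j : ℕ} (π : Equiv.Perm (Fin (i + j + 1))) (h : ¬ Contains p132 π)
    (hi : π ⟨i, by omega⟩ = Fin.last _) :
    ∃ (σ : Equiv.Perm (Fin i)) (ρ : Equiv.Perm (Fin j)), glue σ ρ = π := by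
  set I : Fin (i + j + 1) := ⟨i, by omega⟩ with hI
  have hdec : ∀ p q, p < I → I < q → π q < π p := by
    intro p q hp hq
    by_contra hc
    apply h
    rw [contains132_iff]
    refine ⟨p, I, q, hp, hq, lt_of_le_of_ne (not_lt.1 hc) ?_, ?_⟩
    · exact fun e => (hp.trans hq).ne (π.injective e)
    · rw [hi]
      refine lt_of_le_of_ne (Fin.le_last _) fun e => hq.ne' (π.injective (e.trans hi.symm))
  have hmax : ∀ p, π p ≤ π I := fun p => by rw [hi]; exact Fin.le_last _
  have hR : ∀ q, I < q → (π q).val < j := by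
    intro q hq
    have : (Finset.Iic (π q)).map π.symm.toEmbedding ⊆ Finset.Ioi I := by
      intro x hx
      simp only [Finset.mem_map_equiv, Equiv.symm_symm, Finset.mem_Iic, Finset.mem_Ioi] at hx ⊢
      rcases lt_trichotomy x I with hlt | rfl | hgt
      · exact absurd (hdec x q hlt hq) hx.not_gt
      · exact absurd (π.injective (le_antisymm hx (hmax q))) hq.ne
      · exact hgt
    have := Finset.card_le_card this
    simp only [Finset.card_map, Fin.card_Iic, Fin.card_Ioi, hI] at this
    omega
  have hL : ∀ p, p < I → j ≤ (π p).val := by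
    intro p hp
    have : (Finset.Ici (π p)).map π.symm.toEmbedding ⊆ Finset.Iic I := by
      intro x hx
      simp only [Finset.mem_map_equiv, Equiv.symm_symm, Finset.mem_Ici, Finset.mem_Iic] at hx ⊢
      by_contra hc
      exact absurd (hdec p x hp (not_le.1 hc)) hx.not_gt
    have := Finset.card_le_card this
    simp only [Finset.card_map, Fin.card_Ici, Fin.card_Iic, hI] at this
    omega
  have hL' : ∀ p, p < I → (π p).val < i + j := by
    intro p hp
    have : π p < π I := lt_of_le_of_ne (hmax p) fun e => hp.ne (π.injective e)
    rw [hi, Fin.lt_def] at this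
    simpa using this
  have bl : ∀ p : Fin i, (⟨p.val, by have := p.isLt; omega⟩ : Fin (i + j + 1)) < I :=
    fun p => p.isLt
  have br : ∀ p : Fin j, I < (⟨i + 1 + p.val, by have := p.isLt; omega⟩ : Fin (i + j + 1)) :=
    fun p => by rw [Fin.lt_def]; simp only [hI]; omega
  let s : Fin i → Fin i := fun p => ⟨(π ⟨p.val, by have := p.isLt; omega⟩).val - j, by
    have h1 := hL _ (bl p)
    have h2 := hL' _ (bl p)
    omega⟩
  let r : Fin j → Fin j := fun p => ⟨(π ⟨i + 1 + p.val, by have := p.isLt; omega⟩).val,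
    hR _ (br p)⟩
  have hs : Function.Injective s := by
    intro p q e
    have e := congrArg Fin.val e
    simp only [s] at e
    have h1 := hL _ (bl p)
    have h2 := hL _ (bl q)
    have e' := congrArg Fin.val (π.injective (Fin.ext (by omega :
      (π ⟨p.val, by have := p.isLt; omega⟩).val = (π ⟨q.val, by have := q.isLt; omega⟩).val)))
    exact Fin.ext e'
  have hr : Function.Injective r := by
    intro p q e
    have e := congrArg Fin.val e
    have e' := congrArg Fin.val (π.injective (Fin.ext e))
    dsimp only at e'
    exact Fin.ext (by omega)
  refine ⟨Equiv.ofBijective s (Finite.injective_iff_bijective.mp hs),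
    Equiv.ofBijective r (Finite.injective_iff_bijective.mp hr), ?_⟩
  apply Equiv.ext
  intro p
  apply Fin.ext
  rcases lt_trichotomy p.val i with h | h | h
  · rw [glue_lt _ _ p h]
    have h1 := hL p h
    simp only [Equiv.ofBijective_apply, s]
    exact Nat.add_sub_cancel' h1
  · rw [glue_mid _ _ p h]
    have : p = I := Fin.ext h
    rw [this, hi]
    simp
  · have h' : p.val - i - 1 < j := by have := p.isLt; omega
    rw [glue_gt _ _ p h h']
    simp only [Equiv.ofBijective_apply, r]
    congr 2
    apply Fin.ext
    dsimp only
    omega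

theorem card_fiber (m : ℕ) (T' : Finset (Equiv.Perm (Fin m))) (i j : ℕ) :
    Nat.card {π : Equiv.Perm (Fin (i + j + 1)) //
      (¬ Contains p132 π ∧ ∀ τ' ∈ T', ¬ Contains (appendTop τ') π) ∧
        (π.symm (Fin.last _)).val = i} =
    Nat.card {π : Equiv.Perm (Fin i) // ¬ Contains p132 π ∧ ∀ τ' ∈ T', ¬ Contains τ' π} *
    Nat.card {π : Equiv.Perm (Fin j) //
      ¬ Contains p132 π ∧ ∀ τ' ∈ T', ¬ Contains (appendTop τ') π} := by
  rw [← Nat.card_prod]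
  symm
  refine Nat.card_congr (Equiv.ofBijective (fun x => ⟨glue x.1.1 x.2.1, ⟨?_, ?_⟩, ?_⟩) ⟨?_, ?_⟩)
  · rw [glue_132]
    exact not_or.2 ⟨x.1.2.1, x.2.2.1⟩
  · intro τ hτ
    rw [glue_top]
    exact not_or.2 ⟨x.1.2.2 τ hτ, x.2.2.2 τ hτ⟩
  · have : (glue x.1.1 x.2.1).symm (Fin.last _) = ⟨i, by omega⟩ := by
      rw [Equiv.symm_apply_eq]
      apply Fin.ext
      rw [glue_mid _ _ _ rfl]
      simp
    rw [this]
  · rintro ⟨⟨a, ha⟩, ⟨b, hb⟩⟩ ⟨⟨c, hc⟩, ⟨d, hd⟩⟩ e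
    have e := glue_inj _ _ (congrArg Subtype.val e)
    obtain ⟨rfl, rfl⟩ := e
    rfl
  · rintro ⟨π, ⟨h1, h2⟩, h3⟩
    have h3' : π ⟨i, by omega⟩ = Fin.last _ := by
      rw [← Equiv.eq_symm_apply]
      exact Fin.ext h3.symm
    obtain ⟨σ, ρ, rfl⟩ := exists_glue π h1 h3'
    rw [glue_132, not_or] at h1
    refine ⟨⟨⟨σ, h1.1, fun τ hτ hc => h2 τ hτ ((glue_top _ _ _).2 (Or.inl hc))⟩,
      ⟨ρ, h1.2, fun τ hτ hc => h2 τ hτ ((glue_top _ _ _).2 (Or.inr hc))⟩⟩, rfl⟩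

theorem card_rec (m : ℕ) (T' : Finset (Equiv.Perm (Fin m))) (n : ℕ) :
    Nat.card {π : Equiv.Perm (Fin (n + 1)) //
      (¬ Contains p132 π ∧ ∀ τ' ∈ T', ¬ Contains (appendTop τ') π)} =
    ∑ x ∈ Finset.HasAntidiagonal.antidiagonal n,
    Nat.card {π : Equiv.Perm (Fin x.1) // ¬ Contains p132 π ∧ ∀ τ' ∈ T', ¬ Contains τ' π} *
    Nat.card {π : Equiv.Perm (Fin x.2) //
      ¬ Contains p132 π ∧ ∀ τ' ∈ T', ¬ Contains (appendTop τ') π} := by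
  classical
  have step : ∀ x ∈ Finset.HasAntidiagonal.antidiagonal n,
    Nat.card {π : Equiv.Perm (Fin x.1) // ¬ Contains p132 π ∧ ∀ τ' ∈ T', ¬ Contains τ' π} *
    Nat.card {π : Equiv.Perm (Fin x.2) //
      ¬ Contains p132 π ∧ ∀ τ' ∈ T', ¬ Contains (appendTop τ') π} =
    Nat.card {π : Equiv.Perm (Fin (n + 1)) //
      (¬ Contains p132 π ∧ ∀ τ' ∈ T', ¬ Contains (appendTop τ') π) ∧
        (π.symm (Fin.last _)).val = x.1} := by
    rintro ⟨i, j⟩ hx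
    rw [Finset.HasAntidiagonal.mem_antidiagonal] at hx
    dsimp only at hx
    subst hx
    exact (card_fiber m T' i j).symm
  rw [Finset.sum_congr rfl step]
  simp only [Nat.card_eq_fintype_card, Fintype.card_subtype]
  rw [Finset.card_eq_sum_card_fiberwise (t := Finset.HasAntidiagonal.antidiagonal n)
    (f := fun π : Equiv.Perm (Fin (n + 1)) =>
      ((π.symm (Fin.last _)).val, n - (π.symm (Fin.last _)).val))]
  · apply Finset.sum_congr rfl
    rintro ⟨i, j⟩ hx
    rw [Finset.HasAntidiagonal.mem_antidiagonal] at hx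
    dsimp only at hx
    rw [Finset.filter_filter]
    congr 1
    apply Finset.filter_congr
    intro π _
    simp only [Prod.mk.injEq]
    constructor
    · rintro ⟨h, h1, _⟩; exact ⟨h, h1⟩
    · rintro ⟨h, h1⟩; exact ⟨h, h1, by omega⟩
  · intro π _
    have := (π.symm (Fin.last n)).isLt
    simp only [Finset.mem_coe,
      Finset.HasAntidiagonal.mem_antidiagonal]
    omega

theorem card_zero (m : ℕ) (T' : Finset (Equiv.Perm (Fin m))) :
    Nat.card {π : Equiv.Perm (Fin 0) //
      (¬ Contains p132 π ∧ ∀ τ' ∈ T', ¬ Contains (appendTop τ') π)} = 1 := by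
  rw [Nat.card_eq_one_iff_unique]
  refine ⟨⟨fun a b => Subtype.ext (Subsingleton.elim _ _)⟩, ⟨⟨1, ?_, ?_⟩⟩⟩
  · rintro ⟨f, _⟩; exact (f 0).elim0
  · rintro τ _ ⟨f, _⟩; exact (f 0).elim0

/-- For `k = m + 1 ≥ 2` and `T'` a finite set of patterns in `S_{k-1}`,
let `T = {τ'⁺ : τ' ∈ T'}` where `τ'⁺` appends the letter `k` at the end. Then the
generating functions for `132`-avoiding permutations that also avoid `T` (resp. `T'`)
satisfy `F_T(X)·(1 − X·F_{T'}(X)) = 1`. -/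
theorem stmt6 (m : ℕ) (hm : 1 ≤ m) (T' : Finset (Equiv.Perm (Fin m))) :
    (PowerSeries.mk fun n => ((Nat.card {π : Equiv.Perm (Fin n) //
        ¬ Contains p132 π ∧ ∀ τ' ∈ T', ¬ Contains (appendTop τ') π} : ℕ) : ℚ))
      * (1 - PowerSeries.X * PowerSeries.mk fun n =>
          ((Nat.card {π : Equiv.Perm (Fin n) //
            ¬ Contains p132 π ∧ ∀ τ' ∈ T', ¬ Contains τ' π} : ℕ) : ℚ)) = 1 := by
  set A : PowerSeries ℚ := PowerSeries.mk fun n => ((Nat.card {π : Equiv.Perm (Fin n) //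
        ¬ Contains p132 π ∧ ∀ τ' ∈ T', ¬ Contains (appendTop τ') π} : ℕ) : ℚ) with hA
  set B : PowerSeries ℚ := PowerSeries.mk fun n => ((Nat.card {π : Equiv.Perm (Fin n) //
        ¬ Contains p132 π ∧ ∀ τ' ∈ T', ¬ Contains τ' π} : ℕ) : ℚ) with hB
  have key : A = 1 + PowerSeries.X * (B * A) := by
    ext n
    cases n with
    | zero => simp [hA, card_zero]
    | succ n =>
      rw [map_add, PowerSeries.coeff_succ_X_mul, PowerSeries.coeff_mul]
      simp only [hA, hB, PowerSeries.coeff_mk, PowerSeries.coeff_one]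
      rw [card_rec]
      push_cast
      simp
  linear_combination key
end

section
/- For every n ≥ 0, the number of permutations π ∈ S_n that avoid all three patterns 132, 123 and 213 equals the Fibonacci number Fib(n+1), where Fib(1) = Fib(2) = 1. (Equivalently, the generating function of these numbers is 1/(1 − X − X²).) -/
/-- The pattern `123 ∈ S₃` (the identity). -/
noncomputable def p123 : Equiv.Perm (Fin 3) := Equiv.ofBijective ![0, 1, 2] (by decide)

/-- The pattern `213 ∈ S₃` (zero-indexed: `0↦1, 1↦0, 2↦2`). -/
noncomputable def p213 : Equiv.Perm (Fin 3) := Equiv.ofBijective ![1, 0, 2] (by decide)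


def Good {n : ℕ} (π : Equiv.Perm (Fin n)) : Prop :=
  (∀ i j k, i < j → i < k → π i < π j → π i < π k → j = k) ∧
  (∀ i j k, i < k → j < k → π i < π k → π j < π k → i = j)

theorem contains_iff {n : ℕ} (τ : Equiv.Perm (Fin 3)) (π : Equiv.Perm (Fin n)) :
    Contains τ π ↔ ∃ i j k, i < j ∧ j < k ∧
      ∀ a b : Fin 3, τ a < τ b ↔ π (![i, j, k] a) < π (![i, j, k] b) := by
  constructor
  · rintro ⟨f, hf, h⟩
    refine ⟨f 0, f 1, f 2, hf (by decide), hf (by decide), ?_⟩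
    have : ![f 0, f 1, f 2] = f := by
      ext i; fin_cases i <;> rfl
    rw [this]; exact h
  · rintro ⟨i, j, k, h1, h2, h⟩
    refine ⟨![i, j, k], ?_, h⟩
    intro a b hab
    have := h1.trans h2
    fin_cases a <;> fin_cases b <;> simp_all

theorem good_iff {n : ℕ} (π : Equiv.Perm (Fin n)) :
    (¬ Contains p132 π ∧ ¬ Contains p123 π ∧ ¬ Contains p213 π) ↔ Good π := by
  have c1 : Contains p132 π ↔ ∃ i j k, i < j ∧ j < k ∧ π i < π k ∧ π k < π j := by
    rw [contains_iff]
    refine exists_congr fun i => exists_congr fun j => exists_congr fun k =>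
      and_congr_right fun _ => and_congr_right fun _ => ?_
    simp [Fin.forall_fin_succ, p132]
    grind
  have c2 : Contains p123 π ↔ ∃ i j k, i < j ∧ j < k ∧ π i < π j ∧ π j < π k := by
    rw [contains_iff]
    refine exists_congr fun i => exists_congr fun j => exists_congr fun k =>
      and_congr_right fun _ => and_congr_right fun _ => ?_
    simp [Fin.forall_fin_succ, p123]
    grind
  have c3 : Contains p213 π ↔ ∃ i j k, i < j ∧ j < k ∧ π j < π i ∧ π i < π k := by
    rw [contains_iff]
    refine exists_congr fun i => exists_congr fun j => exists_congr fun k =>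
      and_congr_right fun _ => and_congr_right fun _ => ?_
    simp [Fin.forall_fin_succ, p213]
    grind
  rw [c1, c2, c3]
  constructor
  · rintro ⟨h1, h2, h3⟩
    push Not at h1 h2 h3
    constructor
    · intro i j k hij hik a b
      by_contra hne
      have hp : π j ≠ π k := fun h => hne (π.injective h)
      rcases lt_or_gt_of_ne hne with h | h
      · have := h1 i j k hij h
        have := h2 i j k hij h
        grind
      · have := h1 i k j hik h
        have := h2 i k j hik h
        grind
    · intro i j k hik hjk a b
      by_contra hne
      have hp : π i ≠ π j := fun h => hne (π.injective h)
      rcases lt_or_gt_of_ne hne with h | h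
      · have := h3 i j k h hjk
        have := h2 i j k h hjk
        grind
      · have := h3 j i k h hik
        have := h2 j i k h hik
        grind
  · rintro ⟨h1, h2⟩
    refine ⟨?_, ?_, ?_⟩
    · rintro ⟨i, j, k, a, b, c, d⟩
      exact b.ne (h1 i j k a (a.trans b) (c.trans d) c)
    · rintro ⟨i, j, k, a, b, c, d⟩
      exact b.ne (h1 i j k a (a.trans b) c (c.trans d))
    · rintro ⟨i, j, k, a, b, c, d⟩
      exact a.ne (h2 i j k (a.trans b) b d (c.trans d))

def extA {n : ℕ} (σ : Equiv.Perm (Fin n)) : Equiv.Perm (Fin (n + 1)) :=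
  ((finSuccEquiv n).trans (Equiv.optionCongr σ)).trans finSuccEquivLast.symm

@[simp] theorem extA_zero {n : ℕ} (σ : Equiv.Perm (Fin n)) : extA σ 0 = Fin.last n := by
  simp [extA]

@[simp] theorem extA_succ {n : ℕ} (σ : Equiv.Perm (Fin n)) (i : Fin n) :
    extA σ i.succ = (σ i).castSucc := by
  simp [extA]

theorem extA_inj {n : ℕ} : Function.Injective (extA (n := n)) := by
  intro σ τ h
  ext i
  have := congrArg (fun e => e i.succ) h
  simp at this
  rw [this]

theorem extA_surj {n : ℕ} (π : Equiv.Perm (Fin (n + 1))) (h : π 0 = Fin.last n) :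
    ∃ σ, extA σ = π := by
  have hne : ∀ i : Fin n, π i.succ ≠ Fin.last n := fun i hi =>
    Fin.succ_ne_zero i (π.injective (hi.trans h.symm))
  let f : Fin n → Fin n := fun i => (π i.succ).castPred (hne i)
  have hf : Function.Injective f := by
    intro i j hij
    have := Fin.castPred_inj.1 hij
    exact Fin.succ_injective _ (π.injective this)
  refine ⟨Equiv.ofBijective f (Finite.injective_iff_bijective.1 hf), ?_⟩
  apply Equiv.ext
  intro i
  refine Fin.cases ?_ (fun i => ?_) i
  · simp [h]
  · simp [f]

def extB {n : ℕ} (σ : Equiv.Perm (Fin n)) : Equiv.Perm (Fin (n + 2)) :=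
  (Equiv.swap 0 1).trans (extA (extA σ))

@[simp] theorem extB_zero {n : ℕ} (σ : Equiv.Perm (Fin n)) :
    extB σ 0 = (Fin.last n).castSucc := by
  have : (1 : Fin (n + 2)) = Fin.succ 0 := rfl
  simp only [extB, Equiv.trans_apply, Equiv.swap_apply_left]
  rw [this, extA_succ, extA_zero]

@[simp] theorem extB_one {n : ℕ} (σ : Equiv.Perm (Fin n)) :
    extB σ (Fin.succ 0) = Fin.last (n + 1) := by
  have : (1 : Fin (n + 2)) = Fin.succ 0 := rfl
  simp only [extB, Equiv.trans_apply]
  rw [← this, Equiv.swap_apply_right, extA_zero]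

@[simp] theorem extB_succ {n : ℕ} (σ : Equiv.Perm (Fin n)) (i : Fin n) :
    extB σ i.succ.succ = (σ i).castSucc.castSucc := by
  simp only [extB, Equiv.trans_apply]
  rw [Equiv.swap_apply_of_ne_of_ne (Fin.succ_ne_zero _), extA_succ, extA_succ]
  intro h
  exact Fin.succ_ne_zero i (Fin.succ_injective _ h)

theorem good_extA {n : ℕ} (σ : Equiv.Perm (Fin n)) : Good (extA σ) ↔ Good σ := by
  unfold Good
  simp [Fin.forall_fin_succ (n := n), Fin.not_lt.2 (Fin.le_last _)]

theorem good_extB {n : ℕ} (σ : Equiv.Perm (Fin n)) : Good (extB σ) ↔ Good σ := by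
  unfold Good
  have h1 : ∀ i : Fin n, ¬ Fin.last n < i.castSucc := fun i => Fin.not_lt.2 (Fin.le_last _)
  have h2 : ∀ i : Fin (n + 1), ¬ Fin.last (n + 1) < i.castSucc :=
    fun i => Fin.not_lt.2 (Fin.le_last _)
  simp only [Fin.forall_fin_succ (n := n + 1), Fin.forall_fin_succ (n := n), extB_zero, extB_one,
    extB_succ, Fin.castSucc_lt_castSucc_iff, Fin.succ_lt_succ_iff, Fin.succ_inj, h1, h2]
  simp

theorem good_cases {n : ℕ} (π : Equiv.Perm (Fin (n + 2))) (h : Good π) :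
    π 0 = Fin.last (n + 1) ∨ (π 0 = (Fin.last n).castSucc ∧ π 1 = Fin.last (n + 1)) := by
  obtain ⟨h1, h2⟩ := h
  by_cases h0 : π 0 = Fin.last (n + 1)
  · exact Or.inl h0
  right
  obtain ⟨m, hm⟩ := π.surjective (Fin.last (n + 1))
  have hlt : ∀ x, x ≠ m → π x < π m := fun x hx => by
    rw [hm, Fin.lt_last_iff_ne_last, ← hm]
    exact fun h => hx (π.injective h)
  have hm0 : 0 ≠ m := fun h => h0 (h ▸ hm)
  have hm1 : m = 1 := by
    by_contra hne
    have h01 : (0 : Fin (n + 2)) ≠ 1 := by simp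
    refine h01 (h2 0 1 m ?_ ?_ (hlt _ hm0) (hlt _ (Ne.symm hne)))
    · exact Fin.pos_iff_ne_zero.2 hm0.symm
    · rw [Fin.lt_def]
      have a : (m : ℕ) ≠ 0 := fun h => hm0 (Fin.ext h.symm)
      have b : (m : ℕ) ≠ 1 := fun h => hne (Fin.ext h)
      change 1 % (n + 2) < _
      rw [Nat.mod_eq_of_lt (by omega)]
      omega
  subst hm1
  refine ⟨?_, hm⟩
  by_contra hne
  obtain ⟨q, hq⟩ := π.surjective (Fin.last n).castSucc
  have hq0 : q ≠ 0 := fun h => hne (h ▸ hq)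
  have hq1 : q = 1 := by
    refine h1 0 q 1 (Fin.pos_iff_ne_zero.2 hq0) (Fin.pos_iff_ne_zero.2 hm0.symm) ?_ (hlt 0 hm0)
    rw [hq, Fin.lt_def]
    have a : (π 0 : ℕ) ≠ n + 1 := fun h => h0 (Fin.ext h)
    have b : (π 0 : ℕ) ≠ n := fun h => hne (Fin.ext h)
    have := (π 0).2
    simp
    omega
  rw [hq1, hm] at hq
  have := congrArg Fin.val hq
  simp at this

theorem card_rec_s11 (n : ℕ) : Nat.card {π : Equiv.Perm (Fin (n + 2)) // Good π} =
    Nat.card {π : Equiv.Perm (Fin (n + 1)) // Good π} +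
      Nat.card {π : Equiv.Perm (Fin n) // Good π} := by
  rw [← Nat.card_sum]
  symm
  let f : {π : Equiv.Perm (Fin (n + 1)) // Good π} ⊕ {π : Equiv.Perm (Fin n) // Good π} →
      {π : Equiv.Perm (Fin (n + 2)) // Good π} :=
    Sum.elim (fun σ => ⟨extA σ.1, (good_extA _).2 σ.2⟩) (fun σ => ⟨extB σ.1, (good_extB _).2 σ.2⟩)
  have hd : ∀ (σ : Equiv.Perm (Fin (n + 1))) (τ : Equiv.Perm (Fin n)), extA σ ≠ extB τ := by
    intro σ τ h
    have := congrArg (fun e => (e 0 : ℕ)) h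
    simp at this
  refine Nat.card_eq_of_bijective f ⟨?_, ?_⟩
  · rintro (⟨a, ha⟩ | ⟨a, ha⟩) (⟨b, hb⟩ | ⟨b, hb⟩) hab
    · have := extA_inj (Subtype.mk.inj hab)
      subst this; rfl
    · exact (hd _ _ (Subtype.mk.inj hab)).elim
    · exact (hd _ _ (Subtype.mk.inj hab).symm).elim
    · have h := Subtype.mk.inj hab
      have : a = b := by
        apply extA_inj
        apply extA_inj
        apply Equiv.ext
        intro x
        have := congrArg (fun e => e (Equiv.swap 0 1 x)) h
        simpa [extB] using this
      subst this; rfl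
  · rintro ⟨π, hπ⟩
    rcases good_cases π hπ with h | ⟨h, h'⟩
    · obtain ⟨σ, rfl⟩ := extA_surj π h
      exact ⟨Sum.inl ⟨σ, (good_extA _).1 hπ⟩, rfl⟩
    · obtain ⟨τ, hτ⟩ := extA_surj ((Equiv.swap 0 1).trans π) (by simp [h'])
      have ht : τ 0 = Fin.last n := by
        have := extA_succ τ 0
        rw [hτ] at this
        simp [h] at this
        exact this.symm
      obtain ⟨σ, rfl⟩ := extA_surj τ ht
      have : extB σ = π := by
        apply Equiv.ext
        intro x
        simp [extB, hτ]
      subst this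
      exact ⟨Sum.inr ⟨σ, (good_extB _).1 hπ⟩, rfl⟩

theorem card_good (n : ℕ) : Nat.card {π : Equiv.Perm (Fin n) // Good π} = Nat.fib (n + 1) := by
  induction n using Nat.twoStepInduction with
  | zero =>
    rw [Nat.card_congr (Equiv.subtypeUnivEquiv (fun π => ?_))]
    · simp
    · exact ⟨fun i => i.elim0, fun i => i.elim0⟩
  | one =>
    rw [Nat.card_congr (Equiv.subtypeUnivEquiv (fun π => ?_))]
    · simp
    · exact ⟨fun i j k _ _ _ _ => Subsingleton.elim _ _,
        fun i j k _ _ _ _ => Subsingleton.elim _ _⟩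
  | more n h1 h2 =>
    rw [card_rec_s11, h1, h2, Nat.fib_add_two (n := n + 1), add_comm]

/-- The number of permutations of `{1,…,n}` avoiding `132`, `123` and
`213` equals the Fibonacci number `Fib(n+1)` (with `Fib 1 = Fib 2 = 1`). -/
theorem stmt11 (n : ℕ) :
    Nat.card {π : Equiv.Perm (Fin n) //
        ¬ Contains p132 π ∧ ¬ Contains p123 π ∧ ¬ Contains p213 π}
      = Nat.fib (n + 1) := by
  rw [← card_good]
  exact Nat.card_congr (Equiv.subtypeEquivRight good_iff)
end

section
/- Let k ≥ 1 and let G(X) = Σ_{n≥0} |{π ∈ S_n : π avoids 132 and contains the increasing pattern 12⋯k exactly once}|·Xⁿ ∈ ℚ⟦X⟧. Then G(X)·p_k(X)² = X^k. (Equivalently, G(x) = 1 / U_k(1/(2√x))².) -/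
/-- `pU (m+1)` is the polynomial `p_m(X) = X^{m/2}·U_m(1/(2√X))` built from the Chebyshev
recurrence: `pU 0 = p_{−1} = 0`, `pU 1 = p_0 = 1`, and `p_{m+1} = p_m − X·p_{m−1}`. -/
noncomputable def pU : ℕ → Polynomial ℚ
  | 0 => 0
  | 1 => 1
  | m + 2 => pU (m + 1) - Polynomial.X * pU m

open BinaryTree in
def occT : ℕ → BinaryTree Unit → ℕ
  | 0, _ => 1
  | _ + 1, .nil => 0
  | k + 1, .node _ l r => occT (k + 1) l + occT k l + occT (k + 1) r

@[simp] theorem occT_zero (t) : occT 0 t = 1 := by cases t <;> simp [occT]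
@[simp] theorem occT_nil (k) : occT (k + 1) .nil = 0 := by simp [occT]
@[simp] theorem occT_node (k u l r) : occT (k + 1) (.node u l r) =
    occT (k + 1) l + occT k l + occT (k + 1) r := by simp [occT]

theorem occT_pos (t : BinaryTree Unit) : ∀ k, 1 ≤ occT (k + 1) t → 1 ≤ occT k t := by
  induction t with
  | nil => intro k; simp
  | node u l r hl hr =>
    intro k h
    cases k with
    | zero => simp
    | succ k =>
      have := hl k; have := hr k; have := hl (k+1); have := hr (k+1)
      simp only [occT_node] at *
      omega

theorem occT_two (t : BinaryTree Unit) : ∀ k, 1 ≤ occT (k + 2) t → 2 ≤ occT (k + 1) t := by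
  induction t with
  | nil => intro k; simp
  | node u l r hl hr =>
    intro k h
    have h1 := hl k; have h2 := hr k; have h3 := occT_pos l k
    rw [occT_node] at h ⊢
    rw [show k + 1 + 1 = k + 2 from rfl] at h
    omega

/-! generating functions -/

noncomputable def gf (w : BinaryTree Unit → ℚ) : PowerSeries ℚ :=
  PowerSeries.mk fun n => ∑ t ∈ BinaryTree.treesOfNumNodesEq n, w t

theorem sum_trees_succ (w : BinaryTree Unit → ℚ) (n : ℕ) :
    ∑ t ∈ BinaryTree.treesOfNumNodesEq (n + 1), w t =
    ∑ ij ∈ Finset.HasAntidiagonal.antidiagonal n, ∑ l ∈ BinaryTree.treesOfNumNodesEq ij.1,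
      ∑ r ∈ BinaryTree.treesOfNumNodesEq ij.2, w (.node () l r) := by
  rw [BinaryTree.treesOfNumNodesEq_succ, Finset.sum_biUnion]
  · apply Finset.sum_congr rfl
    rintro ⟨i, j⟩ _
    rw [Finset.sum_map, Finset.sum_product]
    rfl
  · simp_rw [Set.PairwiseDisjoint, Set.Pairwise, Finset.disjoint_left]
    aesop

theorem gf_node (w u1 v1 u2 v2 : BinaryTree Unit → ℚ)
    (h : ∀ l r, w (.node () l r) = u1 l * v1 r + u2 l * v2 r) :
    gf w = PowerSeries.C (w .nil) + PowerSeries.X * (gf u1 * gf v1 + gf u2 * gf v2) := by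
  ext n
  cases n with
  | zero => simp [gf]
  | succ n =>
    rw [map_add, PowerSeries.coeff_succ_X_mul, map_add, PowerSeries.coeff_mul,
      PowerSeries.coeff_mul]
    simp only [gf, PowerSeries.coeff_mk, sum_trees_succ, h]
    rw [PowerSeries.coeff_C]
    simp [Finset.sum_add_distrib, Finset.sum_mul_sum]

noncomputable def FF (k : ℕ) : PowerSeries ℚ := gf fun t => if occT k t = 0 then 1 else 0
noncomputable def GG (k : ℕ) : PowerSeries ℚ := gf fun t => if occT k t = 1 then 1 else 0

theorem gf_zero : gf (fun _ => 0) = 0 := by ext n; simp [gf]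

theorem FF_zero : FF 0 = 0 := by simp [FF, gf_zero]

theorem FF_succ (k : ℕ) : FF (k + 1) = 1 + PowerSeries.X * (FF k * FF (k + 1)) := by
  have := gf_node (fun t => if occT (k + 1) t = 0 then 1 else 0)
    (fun t => if occT k t = 0 then 1 else 0) (fun t => if occT (k + 1) t = 0 then 1 else 0)
    (fun _ => 0) (fun _ => 0) (by
      intro l r
      have := occT_pos l k
      simp only [occT_node]
      split_ifs <;> first | omega | simp)
  simpa [gf_zero, FF] using this

theorem GG_one : GG 1 = PowerSeries.X := by
  have := gf_node (fun t => if occT 1 t = 1 then 1 else 0)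
    (fun t => if occT 1 t = 0 then 1 else 0) (fun t => if occT 1 t = 0 then 1 else 0)
    (fun _ => 0) (fun _ => 0) (by
      intro l r
      rw [show occT 1 (.node () l r) = occT 1 l + 1 + occT 1 r by rw [occT_node, occT_zero]]
      split_ifs <;> first | omega | simp)
  have h1 : FF 1 = 1 := by rw [FF_succ, FF_zero]; simp
  have h2 : GG 1 = PowerSeries.X * (FF 1 * FF 1) := by
    simpa [gf_zero, FF, GG] using this
  rw [h2, h1]; simp

theorem GG_succ (k : ℕ) : GG (k + 2) =
    PowerSeries.X * (GG (k + 1) * FF (k + 2) + FF (k + 1) * GG (k + 2)) := by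
  have := gf_node (fun t => if occT (k + 2) t = 1 then 1 else 0)
    (fun t => if occT (k + 1) t = 1 then 1 else 0) (fun t => if occT (k + 2) t = 0 then 1 else 0)
    (fun t => if occT (k + 1) t = 0 then 1 else 0) (fun t => if occT (k + 2) t = 1 then 1 else 0)
    (by
      intro l r
      have := occT_two l k
      rw [show occT (k + 2) (.node () l r) = occT (k + 2) l + occT (k + 1) l + occT (k + 2) r from occT_node _ _ _ _]
      split_ifs <;> first | omega | simp)
  simpa [FF, GG] using this

theorem pU_rec (m : ℕ) : (pU (m + 2) : PowerSeries ℚ) = (pU (m + 1) : PowerSeries ℚ) -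
    PowerSeries.X * (pU m : PowerSeries ℚ) := by
  rw [pU]; simp [Polynomial.coe_sub]

theorem FF_pU (k : ℕ) : FF k * (pU (k + 1) : PowerSeries ℚ) = pU k := by
  induction k with
  | zero => simp [FF_zero, pU]
  | succ k ih =>
    rw [pU_rec]
    linear_combination (-FF (k+1) * PowerSeries.X) * (-ih) + (pU (k+1) : PowerSeries ℚ) * FF_succ k

theorem GG_pU (k : ℕ) : GG (k + 1) * (pU (k + 2) : PowerSeries ℚ) ^ 2 = PowerSeries.X ^ (k + 1) := by
  induction k with
  | zero => simp [GG_one, pU]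
  | succ k ih =>
    have e1 := FF_pU (k + 1)
    have e2 := FF_pU (k + 2)
    have e3 := GG_succ k
    have e4 := pU_rec (k + 1)
    have e5 : GG (k + 2) * (pU (k + 3) : PowerSeries ℚ)
        = (pU (k + 2) : PowerSeries ℚ) * (PowerSeries.X * (GG (k + 1) * FF (k + 2))) := by
      rw [e4]
      linear_combination (GG (k + 2) * PowerSeries.X) * e1 + (pU (k+2) : PowerSeries ℚ) * e3
    calc GG (k + 2) * (pU (k + 3) : PowerSeries ℚ) ^ 2
        = PowerSeries.X * (GG (k + 1) * (pU (k + 2) : PowerSeries ℚ) ^ 2) := by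
          linear_combination (pU (k + 3) : PowerSeries ℚ) * e5 +
            ((pU (k + 2) : PowerSeries ℚ) * (PowerSeries.X * GG (k + 1))) * e2
      _ = _ := by rw [ih]; ring

/-! words -/

def W : BinaryTree Unit → ℕ → List ℕ
  | .nil, _ => []
  | .node _ l r, o => W l (o + r.numNodes) ++ (o + l.numNodes + r.numNodes) :: W r o

@[simp] theorem W_length (t) : ∀ o, (W t o).length = t.numNodes := by
  induction t with
  | nil => simp [W]
  | node u l r hl hr => intro o; simp [W, hl, hr]; omega

theorem W_mem (t) : ∀ o, ∀ x ∈ W t o, o ≤ x ∧ x < o + t.numNodes := by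
  induction t with
  | nil => simp [W]
  | node u l r hl hr =>
    intro o x hx
    simp only [W, List.mem_append, List.mem_cons, BinaryTree.numNodes] at hx ⊢
    rcases hx with hx | hx | hx
    · have := hl _ _ hx; omega
    · omega
    · have := hr _ _ hx; omega

theorem W_nodup (t) : ∀ o, (W t o).Nodup := by
  induction t with
  | nil => simp [W]
  | node u l r hl hr =>
    intro o
    rw [W, List.nodup_append]
    refine ⟨hl _, List.nodup_cons.2 ⟨?_, hr _⟩, ?_⟩
    · intro h; have := W_mem _ _ _ h; omega
    · intro a ha b hb
      have := W_mem _ _ _ ha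
      rcases List.mem_cons.1 hb with hb | hb
      · omega
      · have := W_mem _ _ _ hb; omega

def Av (l : List ℕ) : Prop := ∀ a b c, [a, b, c].Sublist l → ¬ (a < c ∧ c < b)

theorem Av_decomp {L R : List ℕ} {m : ℕ} (hL : Av L) (hR : Av R) (hLm : ∀ a ∈ L, a < m)
    (hRlt : ∀ a ∈ R, a < m) (hLR : ∀ a ∈ L, ∀ c ∈ R, c < a) : Av (L ++ m :: R) := by
  intro a b c h ⟨h1, h2⟩
  obtain ⟨s, t, e, hs, ht⟩ := List.sublist_append_iff.1 h
  have hRm : ∀ x ∈ t, x = m ∨ x ∈ R := fun x hx => List.mem_cons.1 (ht.subset hx)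
  have hsL := hs.subset
  match s, e with
  | [], e =>
    simp at e; subst e
    rcases List.sublist_cons_iff.1 ht with ht | ⟨r, e, hr⟩
    · exact hR _ _ _ ht ⟨h1, h2⟩
    · simp at e; obtain ⟨rfl, rfl⟩ := e
      have := hRlt c (hr.subset (by simp))
      omega
  | [x], e =>
    simp at e; obtain ⟨rfl, rfl⟩ := e
    have ha := hsL (List.mem_singleton.2 rfl)
    have := hLm _ ha
    have hbR := hRm b (by simp)
    have hcR := hRm c (by simp)
    rcases hcR with rfl | hc
    · rcases hbR with rfl | hb
      · omega
      · have := hLR _ ha _ hb; omega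
    · have := hLR _ ha _ hc; omega
  | [x, y], e =>
    simp at e; obtain ⟨rfl, rfl, rfl⟩ := e
    have ha := hsL (show a ∈ [a, b] by simp)
    have hb := hsL (show b ∈ [a, b] by simp)
    have := hLm _ hb
    rcases hRm c (by simp) with rfl | hc
    · omega
    · have := hLR _ ha _ hc; omega
  | [x, y, z], e =>
    simp at e; obtain ⟨rfl, rfl, rfl, rfl⟩ := e
    exact hL _ _ _ hs ⟨h1, h2⟩
  | x :: y :: z :: v :: s, e => simp at e

theorem W_inj : ∀ t t' : BinaryTree Unit, ∀ o, W t o = W t' o → t = t' := by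
  intro t
  induction t with
  | nil =>
    intro t' o h
    cases t' with
    | nil => rfl
    | node u l r => simp [W] at h
  | node u l r hl hr =>
    intro t' o h
    cases t' with
    | nil => simp [W] at h
    | node u' l' r' =>
      have hlen := congrArg List.length h
      simp only [W_length, BinaryTree.numNodes] at hlen
      simp only [W] at h
      have em : o + l.numNodes + r.numNodes = o + l'.numNodes + r'.numNodes := by omega
      rw [List.append_cons_inj_of_notMem] at h
      · obtain ⟨h1, -, h3⟩ := h
        have e := hr _ _ h3
        subst e
        rw [hl _ _ h1]
      · intro h; have := W_mem _ _ _ h; omega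
      · intro h; have := W_mem _ _ _ h; omega

theorem W_surj : ∀ n o, ∀ l : List ℕ, l.length = n → l.Nodup → (∀ x ∈ l, o ≤ x ∧ x < o + n) →
    Av l → ∃ t, W t o = l := by
  intro n
  induction n using Nat.strong_induction_on with
  | _ n ih =>
  intro o l hlen hnd hmem hav
  cases n with
  | zero => exact ⟨.nil, by rw [List.length_eq_zero_iff.1 hlen]; rfl⟩
  | succ n =>
  have hfs : l.toFinset = Finset.Ico o (o + (n + 1)) := by
    apply Finset.eq_of_subset_of_card_le
    · intro x hx; simpa using hmem x (by simpa using hx)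
    · rw [List.toFinset_card_of_nodup hnd]; simp [hlen]
  have hall : ∀ x, x ∈ l ↔ o ≤ x ∧ x < o + (n + 1) := by
    intro x; rw [← List.mem_toFinset, hfs, Finset.mem_Ico]
  obtain ⟨L, R, rfl⟩ := List.append_of_mem ((hall (o + n)).2 (by omega))
  have hnd' := hnd
  rw [List.nodup_append, List.nodup_cons] at hnd'
  obtain ⟨hndL, ⟨hmR, hndR⟩, hdisj⟩ := hnd'
  simp only [List.length_append, List.length_cons] at hlen
  have hLm : ∀ a ∈ L, o ≤ a ∧ a < o + n := by
    intro a ha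
    have h1 := hmem a (by simp [ha])
    have h2 := hdisj a ha (o + n) (by simp)
    omega
  have hRm : ∀ a ∈ R, o ≤ a ∧ a < o + n := by
    intro a ha
    have h1 := hmem a (by simp [ha])
    have h2 : a ≠ o + n := by rintro rfl; exact hmR ha
    omega
  have hLR : ∀ a ∈ L, ∀ c ∈ R, c < a := by
    intro a ha c hc
    have h1 : [a, o + n, c].Sublist (L ++ (o + n) :: R) := by
      have := (List.singleton_sublist.2 ha).append
        ((List.singleton_sublist.2 hc).cons_cons (o + n))
      simpa using this
    have := hav _ _ _ h1
    have := hdisj a ha c (by simp [hc])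
    have := hRm c hc
    omega
  have hRb : ∀ c ∈ R, o ≤ c ∧ c < o + R.length := by
    intro c hc
    have hs : Finset.Icc o c ⊆ R.toFinset := by
      intro x hx
      rw [Finset.mem_Icc] at hx
      have hcm := hRm c hc
      have := (hall x).2 (by omega)
      rw [List.mem_append, List.mem_cons] at this
      rcases this with h | h | h
      · have := hLR x h c hc; omega
      · omega
      · simpa using h
    have := Finset.card_le_card hs
    rw [List.toFinset_card_of_nodup hndR, Nat.card_Icc] at this
    have := hRm c hc
    omega
  have hRf : R.toFinset = Finset.Ico o (o + R.length) := by
    apply Finset.eq_of_subset_of_card_le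
    · intro x hx; simpa using hRb x (by simpa using hx)
    · rw [List.toFinset_card_of_nodup hndR]; simp
  have hLb : ∀ a ∈ L, o + R.length ≤ a ∧ a < o + R.length + L.length := by
    intro a ha
    have h1 := hLm a ha
    refine ⟨?_, by omega⟩
    by_contra h
    have : a ∈ R.toFinset := by rw [hRf, Finset.mem_Ico]; omega
    exact hdisj a ha a (by simp at this; simp [this]) rfl
  obtain ⟨tl, htl⟩ := ih L.length (by omega) (o + R.length) L rfl hndL hLb
    (fun a b c h => hav a b c (h.trans (List.sublist_append_left _ _)))
  obtain ⟨tr, htr⟩ := ih R.length (by omega) o R rfl hndR hRb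
    (fun a b c h => hav a b c (h.trans ((List.sublist_cons_self _ _).trans
      (List.sublist_append_right _ _))))
  have e1 : tl.numNodes = L.length := by rw [← htl, W_length]
  have e2 : tr.numNodes = R.length := by rw [← htr, W_length]
  refine ⟨.node () tl tr, ?_⟩
  rw [W, e2, htl, htr, e1]
  congr 2
  omega

def Inc (k : ℕ) (l : List ℕ) : Set (List ℕ) :=
  {s | s.Sublist l ∧ s.length = k ∧ s.Pairwise (· < ·)}

theorem Inc_finite (k l) : (Inc k l).Finite :=
  (List.finite_toSet l.sublists).subset fun s hs => by simpa using hs.1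

theorem Inc_decomp {L R : List ℕ} {m : ℕ} (k : ℕ) (hLm : ∀ a ∈ L, a < m)
    (hRm : ∀ a ∈ R, a < m) (hLR : ∀ a ∈ L, ∀ c ∈ R, c < a) :
    Inc (k + 1) (L ++ m :: R) = Inc (k + 1) L ∪ (fun s => s ++ [m]) '' Inc k L ∪ Inc (k + 1) R := by
  ext s
  constructor
  · rintro ⟨h1, h2, h3⟩
    obtain ⟨s1, s2, rfl, hs1, hs2⟩ := List.sublist_append_iff.1 h1
    rw [List.pairwise_append] at h3
    obtain ⟨p1, p2, p3⟩ := h3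
    rcases List.sublist_cons_iff.1 hs2 with hs2 | ⟨r, rfl, hr⟩
    · cases s1 with
      | nil => right; exact ⟨by simpa using hs2, h2, by simpa using p2⟩
      | cons x s1 =>
        cases s2 with
        | nil => left; left; exact ⟨by simpa using hs1, h2, by simpa using p1⟩
        | cons y s2 =>
          have := p3 x (by simp) y (by simp)
          have := hLR x (hs1.subset (by simp)) y (hs2.subset (by simp))
          omega
    · cases r with
      | nil => left; right; exact ⟨s1, ⟨hs1, by simpa using h2, p1⟩, rfl⟩
      | cons y r =>
        have := (List.pairwise_cons.1 p2).1 y (by simp)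
        have := hRm y (hr.subset (by simp))
        omega
  · rintro ((⟨h1, h2, h3⟩ | ⟨s, ⟨h1, h2, h3⟩, rfl⟩) | ⟨h1, h2, h3⟩)
    · exact ⟨h1.trans (List.sublist_append_left _ _), h2, h3⟩
    · refine ⟨h1.append (by simp), by simp [h2], ?_⟩
      rw [List.pairwise_append]
      refine ⟨h3, by simp, ?_⟩
      intro a ha b hb
      rw [List.mem_singleton.1 hb]
      exact hLm a (h1.subset ha)
    · exact ⟨h1.trans ((List.sublist_cons_self _ _).trans (List.sublist_append_right _ _)), h2, h3⟩

theorem Inc_ncard {L R : List ℕ} {m : ℕ} (k : ℕ) (hLm : ∀ a ∈ L, a < m)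
    (hRm : ∀ a ∈ R, a < m) (hLR : ∀ a ∈ L, ∀ c ∈ R, c < a) :
    (Inc (k + 1) (L ++ m :: R)).ncard =
      (Inc (k + 1) L).ncard + (Inc k L).ncard + (Inc (k + 1) R).ncard := by
  rw [Inc_decomp k hLm hRm hLR, Set.ncard_union_eq _ (((Inc_finite _ _).union
    ((Inc_finite _ _).image _))) (Inc_finite _ _), Set.ncard_union_eq _ (Inc_finite _ _)
    ((Inc_finite _ _).image _), Set.ncard_image_of_injective]
  · intro a b h; simpa using h
  · rw [Set.disjoint_left]
    rintro _ ⟨h1, -, -⟩ ⟨s, -, rfl⟩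
    have := hLm m (h1.subset (by simp))
    omega
  · rw [Set.disjoint_left]
    rintro s hs ⟨h1, h2, h3⟩
    rcases hs with hs | ⟨s, -, rfl⟩
    · cases s with
      | nil => simp at h2
      | cons x s =>
        have := hLR x (hs.1.subset (by simp)) x (h1.subset (by simp))
        omega
    · have := hRm m (h1.subset (by simp))
      omega

theorem Inc_zero (l) : (Inc 0 l).ncard = 1 := by
  rw [Set.ncard_eq_one]
  refine ⟨[], ?_⟩
  ext s
  simp only [Inc, Set.mem_ofPred_eq, List.length_eq_zero_iff, Set.mem_singleton_iff]
  constructor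
  · tauto
  · rintro rfl; simp

theorem Inc_W (t) : ∀ k o, (Inc k (W t o)).ncard = occT k t := by
  induction t with
  | nil =>
    intro k o
    cases k with
    | zero => simp [Inc_zero]
    | succ k =>
      have : Inc (k + 1) (W .nil o) = ∅ := by
        ext s; simp only [Inc, W, Set.mem_ofPred_eq, List.sublist_nil, Set.mem_empty_iff_false,
          iff_false]
        rintro ⟨rfl, h, -⟩; simp at h
      simp [this]
  | node u l r hl hr =>
    intro k o
    cases k with
    | zero => simp [Inc_zero]
    | succ k =>
      rw [W, Inc_ncard, hl, hl, hr, occT_node]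
      · intro a ha; have := W_mem _ _ _ ha; omega
      · intro a ha; have := W_mem _ _ _ ha; omega
      · intro a ha c hc; have := W_mem _ _ _ ha; have := W_mem _ _ _ hc; omega

theorem W_av (t) : ∀ o, Av (W t o) := by
  induction t with
  | nil => intro o a b c h; simp [W] at h
  | node u l r hl hr =>
    intro o
    rw [W]
    apply Av_decomp (m := o + l.numNodes + r.numNodes) (hl _) (hr _)
    · intro a ha; have := W_mem _ _ _ ha; omega
    · intro a ha; have := W_mem _ _ _ ha; omega
    · intro a ha c hc; have := W_mem _ _ _ ha; have := W_mem _ _ _ hc; omega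

/-! permutations -/

def wd {n : ℕ} (π : Equiv.Perm (Fin n)) : List ℕ := List.ofFn fun i => (π i : ℕ)

theorem sub_ofFn {k n : ℕ} (g : Fin k → ℕ) (h : Fin n → ℕ) :
    (List.ofFn g).Sublist (List.ofFn h) ↔ ∃ f : Fin k → Fin n, StrictMono f ∧ ∀ i, g i = h (f i) := by
  rw [List.sublist_iff_exists_fin_orderEmbedding_get_eq]
  constructor
  · rintro ⟨f, hf⟩
    refine ⟨fun i => Fin.cast (by simp) (f (Fin.cast (by simp) i)), ?_, ?_⟩
    · intro a b hab
      have : f (Fin.cast (by simp) a) < f (Fin.cast (by simp) b) := f.lt_iff_lt.2 (by simpa using hab)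
      simpa using this
    · intro i
      have := hf (Fin.cast (by simp) i)
      simp only [List.get_ofFn] at this
      exact this
  · rintro ⟨f, hf, hg⟩
    refine ⟨OrderEmbedding.ofStrictMono
      (fun i => Fin.cast (by simp) (f (Fin.cast (by simp) i))) ?_, ?_⟩
    · intro a b hab
      have : f (Fin.cast (by simp) a) < f (Fin.cast (by simp) b) := hf (by simpa using hab)
      simpa using this
    · intro i
      have := hg (Fin.cast (by simp) i)
      simp only [List.get_ofFn]
      exact this

theorem wd_inj {n : ℕ} : Function.Injective (wd (n := n)) := by
  intro π σ h
  have := List.ofFn_injective h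
  ext i
  exact congrFun this i

theorem av_iff {n : ℕ} (π : Equiv.Perm (Fin n)) : ¬ Contains p132 π ↔ Av (wd π) := by
  unfold Av Contains
  have e : ∀ a b c : ℕ, [a, b, c] = List.ofFn ![a, b, c] := by intro a b c; simp
  constructor
  · intro h a b c hs ⟨h1, h2⟩
    rw [e, wd, sub_ofFn] at hs
    obtain ⟨f, hf, hg⟩ := hs
    apply h
    refine ⟨f, hf, ?_⟩
    have g0 := hg 0
    have g1 := hg 1
    have g2 := hg 2
    simp at g0 g1 g2
    intro x y
    fin_cases x <;> fin_cases y <;> simp [p132, Fin.lt_def, ← g0, ← g1, ← g2] <;> omega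
  · rintro h ⟨f, hf, ho⟩
    refine h (π (f 0)) (π (f 1)) (π (f 2)) ?_ ⟨?_, ?_⟩
    · rw [e, wd, sub_ofFn]
      refine ⟨f, hf, ?_⟩
      intro i; fin_cases i <;> rfl
    · have := (ho 0 2).1 (by simp [p132])
      exact this
    · have := (ho 2 1).1 (by simp [p132])
      exact this

theorem once_iff {k n : ℕ} (π : Equiv.Perm (Fin n)) :
    ContainsOnce (1 : Equiv.Perm (Fin k)) π ↔ (Inc k (wd π)).ncard = 1 := by
  have key : Inc k (wd π) = (fun f : Fin k → Fin n => List.ofFn fun i => (π (f i) : ℕ)) ''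
      {f | IsOccurrence (1 : Equiv.Perm (Fin k)) π f} := by
    ext s
    constructor
    · rintro ⟨h1, h2, h3⟩
      subst h2
      rw [← List.ofFn_get s] at h1 h3 ⊢
      rw [wd, sub_ofFn] at h1
      obtain ⟨f, hf, hg⟩ := h1
      rw [List.pairwise_ofFn] at h3
      have hm : StrictMono fun i => π (f i) := by
        intro a b hab
        have := h3 hab
        rw [hg, hg] at this
        exact this
      refine ⟨fun i => f (Fin.cast (by simp) i), ⟨?_, ?_⟩, ?_⟩
      · intro a b hab; exact hf (by simpa using hab)
      · intro a b
        rw [hm.lt_iff_lt]; simp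
      · simp [← hg]
    · rintro ⟨f, ⟨h1, h2⟩, rfl⟩
      refine ⟨?_, by simp, ?_⟩
      · rw [wd, sub_ofFn]; exact ⟨f, h1, fun _ => rfl⟩
      · rw [List.pairwise_ofFn]
        intro i j hij
        exact (h2 i j).1 hij
  rw [key, Set.ncard_image_of_injective, Set.ncard_eq_one]
  · constructor
    · rintro ⟨f, hf, hu⟩
      exact ⟨f, Set.eq_singleton_iff_unique_mem.2 ⟨hf, hu⟩⟩
    · rintro ⟨f, hf⟩
      exact ⟨f, Set.eq_singleton_iff_unique_mem.1 hf⟩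
  · intro f g h
    have := List.ofFn_injective h
    funext i
    exact π.injective (Fin.ext (congrFun this i))

theorem exists_perm {n : ℕ} (l : List ℕ) (h1 : l.length = n) (h2 : l.Nodup) (h3 : ∀ x ∈ l, x < n) :
    ∃ π : Equiv.Perm (Fin n), wd π = l := by
  subst h1
  let f : Fin l.length → Fin l.length := fun i => ⟨l.get i, h3 _ (l.get_mem i)⟩
  have hf : Function.Injective f := by
    intro a b h
    exact (List.nodup_iff_injective_get.1 h2) (by simpa [f] using h)
  refine ⟨Equiv.ofBijective f (Finite.injective_iff_bijective.1 hf), ?_⟩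
  simp [wd, f]

theorem card_eq (k n : ℕ) : Nat.card {π : Equiv.Perm (Fin n) //
        ¬ Contains p132 π ∧ ContainsOnce (1 : Equiv.Perm (Fin k)) π} =
    ((BinaryTree.treesOfNumNodesEq n).filter fun t => occT k t = 1).card := by
  rw [← Set.ncard_coe_finset]
  change Set.ncard {π : Equiv.Perm (Fin n) |
        ¬ Contains p132 π ∧ ContainsOnce (1 : Equiv.Perm (Fin k)) π} = _
  rw [← Set.ncard_image_of_injective _ wd_inj,
    ← Set.ncard_image_of_injective (f := fun t => W t 0) _ (fun a b h => W_inj a b 0 h)]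
  congr 1
  ext l
  constructor
  · rintro ⟨π, ⟨h1, h2⟩, rfl⟩
    rw [av_iff] at h1
    rw [once_iff] at h2
    obtain ⟨t, ht⟩ := W_surj n 0 (wd π) (by simp [wd])
      (by rw [wd, List.nodup_ofFn]; intro a b h; exact π.injective (Fin.ext h))
      (by
        intro x hx
        simp only [wd, List.mem_ofFn] at hx
        obtain ⟨i, rfl⟩ := hx
        have := (π i).2
        omega) h1
    refine ⟨t, ?_, ht⟩
    rw [← ht, Inc_W] at h2
    have : t.numNodes = n := by rw [← W_length t 0, ht]; simp [wd]
    simp [h2, this]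
  · rintro ⟨t, ht, rfl⟩
    simp only [Finset.coe_filter, BinaryTree.mem_treesOfNumNodesEq, Set.mem_ofPred_eq] at ht
    obtain ⟨hn, ho⟩ := ht
    obtain ⟨π, hπ⟩ := exists_perm (n := n) (W t 0) (by simp [hn]) (W_nodup _ _)
      (fun x hx => by have := W_mem _ _ _ hx; omega)
    refine ⟨π, ⟨?_, ?_⟩, hπ⟩
    · rw [av_iff, hπ]; exact W_av _ _
    · rw [once_iff, hπ, Inc_W, ho]

/-- For `k ≥ 1`, the generating function `G` for `132`-avoiding
permutations containing the increasing pattern `12⋯k` (the identity of `S_k`) exactly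
once satisfies `G·p_k² = X^k` (here `pU (m+1) = p_m`). -/
theorem stmt15 (k : ℕ) (hk : 1 ≤ k) :
    (PowerSeries.mk fun n => ((Nat.card {π : Equiv.Perm (Fin n) //
        ¬ Contains p132 π ∧ ContainsOnce (1 : Equiv.Perm (Fin k)) π} : ℕ) : ℚ))
      * (pU (k + 1) : PowerSeries ℚ) ^ 2 = PowerSeries.X ^ k := by
  obtain ⟨k, rfl⟩ : ∃ j, k = j + 1 := ⟨k - 1, by omega⟩
  rw [← GG_pU k]
  congr 1
  ext n
  rw [PowerSeries.coeff_mk, card_eq, GG, gf, PowerSeries.coeff_mk]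
  simp
end

section
/- Let k ≥ 3. Let F₁(X) = Σ_{n≥0} |{π ∈ S_n : π avoids 132 and 12⋯k, and contains 213⋯k exactly once}|·Xⁿ and F₂(X) = Σ_{n≥0} |{π ∈ S_n : π avoids 132 and 213⋯k, and contains 12⋯k exactly once}|·Xⁿ, as formal power series in ℚ⟦X⟧. Set q_m = p_m − X²·p_{m−2}. Then F₁(X)·q_{k−1}(X)² = X^k and F₂(X)·q_{k−1}(X)² = X^k. (Equivalently, both series equal x / (U_{k−1}(1/(2√x)) − x·U_{k−3}(1/(2√x)))².) -/
namespace S16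
open BinaryTree PowerSeries

abbrev T := BinaryTree Unit

def a : ℕ → T → ℕ
  | 0, _ => 1
  | _ + 1, .nil => 0
  | k + 1, .node _ l r => a (k + 1) l + a k l + a (k + 1) r

def b : ℕ → T → ℕ
  | _, .nil => 0
  | 0, .node _ l r => b 0 l + b 0 r + (a 1 l + 1) * a 1 r
  | k + 1, .node _ l r => b (k + 1) l + b k l + b (k + 1) r

lemma a_zero (t : T) : a 0 t = 1 := by cases t <;> simp [a]
lemma a_nil (k) : a (k+1) .nil = 0 := by simp [a]
lemma b_nil (k) : b k .nil = 0 := by cases k <;> simp [b]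
lemma a_node (k u l r) : a (k+1) (.node u l r) = a (k+1) l + a k l + a (k+1) r := by simp [a]
lemma b_node0 (u l r) : b 0 (.node u l r) = b 0 l + b 0 r + (a 1 l + 1) * a 1 r := by simp [b]
lemma b_node (k u l r) : b (k+1) (.node u l r) = b (k+1) l + b k l + b (k+1) r := by simp [b]

lemma a_one (t : T) : a 1 t = t.numNodes := by
  induction t with
  | nil => simp [a_nil]
  | node u l r hl hr => simp [a_node, a_zero, hl, hr]; omega

lemma a_one_zero {t : T} : a 1 t = 0 ↔ t = .nil := by
  cases t with
  | nil => simp [a_nil]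
  | node u l r => simp [a_node, a_zero]

lemma a_mono (t : T) : ∀ k, a (k+2) t ≠ 0 → 2 ≤ a (k+1) t := by
  induction t with
  | nil => simp [a_nil]
  | node u l r hl hr =>
    intro k
    rw [a_node, a_node]
    have h1 := hl k
    have h2 := hr k
    cases k with
    | zero => rw [a_zero]; intro h; simp only [add_assoc, zero_add, Nat.reduceAdd] at *; omega
    | succ k => have h3 := hl k; intro h; simp only [add_assoc, zero_add, Nat.reduceAdd] at *; omega

lemma b_mono (t : T) : ∀ k, b k t = 0 → b (k+1) t = 0 := by
  induction t with
  | nil => simp [b_nil]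
  | node u l r hl hr =>
    intro k
    cases k with
    | zero =>
      rw [b_node0, b_node]
      intro h
      have := hl 0; have := hr 0; omega
    | succ k =>
      rw [b_node, b_node]
      have := hl (k+1); have := hr (k+1); omega

lemma ab_mono (t : T) : ∀ k, a (k+2) t = 0 → b (k+1) t = 0 := by
  induction t with
  | nil => simp [b_nil]
  | node u l r hl hr =>
    intro k
    rw [a_node, b_node]
    intro h
    have h1 := hl k; have h2 := hr k
    cases k with
    | zero => 
      simp only [add_assoc, zero_add, Nat.reduceAdd] at *
      have : a 1 l = 0 := by omega
      rw [a_one_zero] at this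
      subst this
      simp only [b_nil]
      omega
    | succ k => have := hl k; simp only [add_assoc, zero_add, Nat.reduceAdd] at *; omega

open Classical in
noncomputable def I (P : T → Prop) (t : T) : ℚ := if P t then 1 else 0

noncomputable def gf (φ : T → ℚ) : ℚ⟦X⟧ := PowerSeries.mk fun n => ∑ t ∈ treesOfNumNodesEq n, φ t

lemma gf_rec1 (φ ψ χ : T → ℚ) (h : ∀ u l r, φ (.node u l r) = ψ l * χ r) :
    gf φ = C (φ .nil) + X * (gf ψ * gf χ) := by
  ext n
  cases n with
  | zero => simp [gf]
  | succ n =>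
    rw [map_add, coeff_succ_X_mul, coeff_mul]
    simp only [gf, coeff_mk, coeff_C, Nat.succ_ne_zero, if_false, zero_add]
    rw [treesOfNumNodesEq_succ, Finset.sum_biUnion]
    · refine Finset.sum_congr rfl fun ij _ => ?_
      rw [Finset.sum_mul_sum, ← Finset.sum_product', pairwiseNode, Finset.sum_map]
      exact Finset.sum_congr rfl fun x _ => h _ _ _
    · intro i _ j _ hij
      refine Finset.disjoint_left.2 fun t h1 h2 => hij ?_
      cases t with
      | nil => simp [pairwiseNode] at h1
      | node u l r =>
        simp [pairwiseNode, mem_treesOfNumNodesEq] at h1 h2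
        obtain ⟨_, _, ⟨h1, h1'⟩, e1⟩ := h1
        obtain ⟨_, _, ⟨h2, h2'⟩, e2⟩ := h2
        change BinaryTree.node _ _ _ = _ at e1 e2
        cases e1
        cases e2
        exact Prod.ext (h1.symm.trans h2) (h1'.symm.trans h2')

lemma gf_add (φ ψ : T → ℚ) : gf (φ + ψ) = gf φ + gf ψ := by
  ext n; simp [gf, Finset.sum_add_distrib]

lemma gf_rec2 (φ ψ χ ψ' χ' : T → ℚ) (h0 : φ .nil = 0)
    (h : ∀ u l r, φ (.node u l r) = ψ l * χ r + ψ' l * χ' r) :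
    gf φ = X * (gf ψ * gf χ + gf ψ' * gf χ') := by
  classical
  let φ1 : T → ℚ := fun t => match t with | .nil => 0 | .node _ l r => ψ l * χ r
  let φ2 : T → ℚ := fun t => match t with | .nil => 0 | .node _ l r => ψ' l * χ' r
  have e : φ = φ1 + φ2 := by
    funext t
    cases t with
    | nil => simp [φ1, φ2, h0]
    | node u l r => simp [φ1, φ2, h]
  rw [e, gf_add, gf_rec1 φ1 ψ χ (fun _ _ _ => rfl), gf_rec1 φ2 ψ' χ' (fun _ _ _ => rfl)]
  simp [φ1, φ2, mul_add]

/-- index `k` here is pattern length `k+2` -/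
noncomputable def G (k : ℕ) : ℚ⟦X⟧ := gf (I fun t => a (k+2) t = 0 ∧ b k t = 0)
noncomputable def F1 (k : ℕ) : ℚ⟦X⟧ := gf (I fun t => a (k+2) t = 0 ∧ b k t = 1)
noncomputable def F2 (k : ℕ) : ℚ⟦X⟧ := gf (I fun t => b k t = 0 ∧ a (k+2) t = 1)

lemma gf_nil : gf (I fun t => t = .nil) = 1 := by
  rw [gf_rec1 _ (fun _ => 0) (fun _ => 0) (by intros; simp [I])]
  have : gf (fun _ => 0) = 0 := by ext; simp [gf]
  simp [this, I]

lemma I_congr (P Q R : T → Prop) (u l r) (h : P (.node u l r) ↔ Q l ∧ R r) :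
    I P (.node u l r) = I Q l * I R r := by
  classical
  unfold I
  by_cases Q l <;> by_cases R r <;> simp_all

lemma I_congr2 (P Q R Q' R' : T → Prop) (u l r) (h0 : ¬ ((Q l ∧ R r) ∧ (Q' l ∧ R' r)))
    (h : P (.node u l r) ↔ (Q l ∧ R r) ∨ (Q' l ∧ R' r)) :
    I P (.node u l r) = I Q l * I R r + I Q' l * I R' r := by
  classical
  unfold I
  by_cases Q l <;> by_cases R r <;> by_cases Q' l <;> by_cases R' r <;> simp_all

lemma gf_single : gf (I fun t => a 1 t = 1) = X := by
  rw [gf_rec1 _ (I fun t => t = .nil) (I fun t => t = .nil), gf_nil]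
  · simp [I, a_nil]
  · intro u l r
    apply I_congr
    rw [a_node, a_zero, ← a_one_zero (t := l), ← a_one_zero (t := r)]
    simp only [zero_add]
    omega

lemma single_iff {t : T} : a 1 t = 1 ↔ t = .node () .nil .nil := by
  cases t with
  | nil => simp [a_nil]
  | node u l r =>
    rw [a_node, a_zero]
    simp only [BinaryTree.node.injEq, true_and]
    rw [← a_one_zero (t := l), ← a_one_zero (t := r)]
    simp only [zero_add]
    omega

lemma G_zero : G 0 = 1 + X := by
  unfold G
  rw [gf_rec1 _ (I fun t => t = .nil) (I fun t => t = .nil), gf_nil]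
  · simp [I, a_nil, b_nil]
  · intro u l r
    apply I_congr
    rw [a_node, b_node0]
    constructor
    · rintro ⟨h1, h2⟩
      have e1 : a 1 l = 0 := by omega
      rw [e1] at h2
      have e2 : a 1 r = 0 := by omega
      exact ⟨a_one_zero.1 e1, a_one_zero.1 e2⟩
    · rintro ⟨rfl, rfl⟩
      simp [a_nil, b_nil]

lemma F1_zero : F1 0 = X ^ 2 := by
  unfold F1
  rw [gf_rec1 _ (I fun t => t = .nil) (I fun t => a 1 t = 1), gf_nil, gf_single]
  · simp [I, a_nil, b_nil, sq]
  · intro u l r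
    apply I_congr
    rw [a_node, b_node0]
    constructor
    · rintro ⟨h1, h2⟩
      have e1 : a 1 l = 0 := by omega
      have e2 := a_one_zero.1 e1
      subst e2
      simp only [a_nil, b_nil] at h1 h2
      refine ⟨rfl, ?_⟩
      by_contra h
      have e2 : a 1 r = 0 := by omega
      have e3 := a_one_zero.1 e2
      subst e3
      simp [a_nil, b_nil] at h2
    · rintro ⟨rfl, h⟩
      rw [single_iff] at h
      subst h
      simp [a_nil, b_nil, a_node, b_node0, a_zero]

lemma F2_zero : F2 0 = X ^ 2 := by
  unfold F2
  rw [gf_rec1 _ (I fun t => a 1 t = 1) (I fun t => t = .nil), gf_nil, gf_single]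
  · simp [I, a_nil, b_nil, sq]
  · intro u l r
    apply I_congr
    rw [a_node, b_node0]
    constructor
    · rintro ⟨h2, h1⟩
      have e1 : a 1 r = 0 := by
        by_contra h
        have : 0 < (a 1 l + 1) * a 1 r := by positivity
        omega
      have e2 := a_one_zero.1 e1
      subst e2
      simp only [a_nil, b_nil] at h1 h2
      refine ⟨?_, rfl⟩
      by_contra h
      have e2 : a 1 l = 0 := by
        have := a_mono l 0
        simp only [zero_add] at *
        omega
      have e3 := a_one_zero.1 e2
      subst e3
      simp [a_nil] at h1
    · rintro ⟨h, rfl⟩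
      rw [single_iff] at h
      subst h
      simp [a_nil, b_nil, a_node, b_node0, a_zero]

lemma a_mono0 (t : T) (k) : a (k+1) t = 0 → a (k+2) t = 0 := by
  intro h; by_contra h'; have := a_mono t k h'; omega

lemma G_succ (k : ℕ) : G (k+1) = 1 + X * (G k * G (k+1)) := by
  unfold G
  refine (gf_rec1 (I fun t => a (k+1+2) t = 0 ∧ b (k+1) t = 0) (I fun t => a (k+2) t = 0 ∧ b k t = 0)
    (I fun t => a (k+1+2) t = 0 ∧ b (k+1) t = 0) ?_).trans ?_
  · intro u l r
    apply I_congr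
    rw [a_node, b_node]
    have := a_mono0 l (k+1)
    have := b_mono l k
    simp only [add_assoc, Nat.reduceAdd] at *
    omega
  · simp [I, a_nil, b_nil]

lemma F1_succ (k : ℕ) : F1 (k+1) = X * (G k * F1 (k+1) + F1 k * G (k+1)) := by
  unfold F1 G
  refine (gf_rec2 (I fun t => a (k+1+2) t = 0 ∧ b (k+1) t = 1)
    (I fun t => a (k+2) t = 0 ∧ b k t = 0) (I fun t => a (k+1+2) t = 0 ∧ b (k+1) t = 1)
    (I fun t => a (k+2) t = 0 ∧ b k t = 1) (I fun t => a (k+1+2) t = 0 ∧ b (k+1) t = 0) ?_ ?_).trans ?_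
  · simp [I, b_nil]
  · intro u l r
    apply I_congr2
    · omega
    · rw [a_node, b_node]
      have := a_mono0 l (k+1)
      have := b_mono l k
      have := ab_mono l k
      simp only [add_assoc, Nat.reduceAdd] at *
      omega
  · rfl

lemma F2_succ (k : ℕ) : F2 (k+1) = X * (G k * F2 (k+1) + F2 k * G (k+1)) := by
  unfold F2 G
  refine (gf_rec2 (I fun t => b (k+1) t = 0 ∧ a (k+1+2) t = 1)
    (I fun t => a (k+2) t = 0 ∧ b k t = 0) (I fun t => b (k+1) t = 0 ∧ a (k+1+2) t = 1)
    (I fun t => b k t = 0 ∧ a (k+2) t = 1) (I fun t => a (k+1+2) t = 0 ∧ b (k+1) t = 0) ?_ ?_).trans ?_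
  · simp [I, a_nil]
  · intro u l r
    apply I_congr2
    · omega
    · rw [a_node, b_node]
      have := a_mono l (k+1)
      have := b_mono l k
      simp only [add_assoc, Nat.reduceAdd] at *
      omega
  · rfl

noncomputable def q : ℕ → ℚ⟦X⟧ 
  | 0 => 1 + X
  | k + 1 => (pU (k + 2) : ℚ⟦X⟧) - X ^ 2 * (pU k : ℚ⟦X⟧)

lemma q_rec (k : ℕ) : q (k+2) = q (k+1) - X * q k := by
  cases k with
  | zero => simp [q, pU]; ring
  | succ k => simp [q, pU]; ring

lemma G_q (k : ℕ) : G k * q (k+1) = q k := by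
  induction k with
  | zero => rw [G_zero]; simp [q, pU]
  | succ k ih =>
    have h := G_succ k
    rw [q_rec]
    linear_combination q (k+1) * h + X * G (k+1) * ih

lemma F_main (F : ℕ → ℚ⟦X⟧) (h0 : F 0 = X^2)
    (hs : ∀ k, F (k+1) = X * (G k * F (k+1) + F k * G (k+1))) (k : ℕ) :
    F k * q (k+1) ^ 2 = X ^ (k+2) := by
  induction k with
  | zero => rw [h0]; simp [q, pU]
  | succ k ih =>
    have h := hs k
    have g := G_q k
    have g' := G_q (k+1)
    have e : X ^ (k+1+2) = X * (X:ℚ⟦X⟧) ^ (k+2) := by ring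
    rw [e, ← ih]
    have hq := q_rec k
    simp only [add_assoc, Nat.reduceAdd] at *
    have : F (k+1) * q (k+2) = X * F k * G (k+1) * q (k+1) := by
      rw [hq]
      linear_combination q (k+1) * h + X * F (k+1) * g
    linear_combination q (k+2) * this + X * F k * q (k+1) * g'
def word : T → ℕ → List ℕ
  | .nil, _ => []
  | .node _ l r, o => word l (o + r.numNodes) ++ (o + l.numNodes + r.numNodes) :: word r o

lemma word_length (t : T) : ∀ o, (word t o).length = t.numNodes := by
  induction t with
  | nil => simp [word]
  | node u l r hl hr => intro o; simp [word, hl, hr]; omega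

lemma word_mem (t : T) : ∀ o x, x ∈ word t o ↔ o ≤ x ∧ x < o + t.numNodes := by
  induction t with
  | nil => simp [word]
  | node u l r hl hr => intro o x; simp [word, hl, hr]; omega

lemma word_nodup (t : T) : ∀ o, (word t o).Nodup := by
  induction t with
  | nil => simp [word]
  | node u l r hl hr =>
    intro o
    simp only [word]
    rw [List.nodup_append, List.nodup_cons]
    refine ⟨hl _, ⟨?_, hr _⟩, ?_⟩
    · rw [word_mem]; omega
    · intro x hx y hy
      rw [word_mem] at hx
      rw [List.mem_cons, word_mem] at hy
      omega

lemma word_inj (t : T) : ∀ t' o, word t o = word t' o → t = t' := by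
  induction t with
  | nil =>
    intro t' o h
    cases t' with
    | nil => rfl
    | node u l r => simp [word] at h
  | node u l r hl hr =>
    intro t' o h
    cases t' with
    | nil => simp [word] at h
    | node u' l' r' =>
      have hlen := congrArg List.length h
      rw [word_length, word_length] at hlen
      simp only [numNodes] at hlen
      simp only [word] at h
      have e : o + l'.numNodes + r'.numNodes = o + l.numNodes + r.numNodes := by omega
      rw [e] at h
      rw [List.append_cons_inj_of_notMem] at h
      · obtain ⟨h1, -, h2⟩ := h
        have := hr _ _ h2
        subst this
        have := hl _ _ h1
        subst this
        rfl
      · rw [word_mem]; omega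
      · rw [word_mem]; omega

def Av (w : List ℕ) : Prop := ∀ x y z, [x, y, z].Sublist w → ¬ (x < z ∧ z < y)

/-- splitting of a sublist at the maximum -/
lemma split_sub {s u v : List ℕ} {M : ℕ} : s.Sublist (u ++ M :: v) ↔
    ∃ s1 s2, s1.Sublist u ∧ s2.Sublist v ∧ (s = s1 ++ s2 ∨ s = s1 ++ M :: s2) := by
  rw [List.sublist_append_iff]
  constructor
  · rintro ⟨l1, l2, rfl, h1, h2⟩
    rw [List.sublist_cons_iff] at h2
    rcases h2 with h2 | ⟨r, rfl, h2⟩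
    · exact ⟨l1, l2, h1, h2, .inl rfl⟩
    · exact ⟨l1, r, h1, h2, .inr rfl⟩
  · rintro ⟨s1, s2, h1, h2, rfl | rfl⟩
    · exact ⟨s1, s2, rfl, h1, h2.cons _⟩
    · exact ⟨s1, _, rfl, h1, h2.cons_cons _⟩

lemma word_av (t : T) : ∀ o, Av (word t o) := by
  induction t with
  | nil => intro o x y z h; simp [word] at h
  | node u l r hl hr =>
    intro o x y z h
    rw [word, split_sub] at h
    obtain ⟨s1, s2, h1, h2, h⟩ := h
    have m1 : ∀ x ∈ s1, _ := fun x hx => (word_mem _ _ _).1 (h1.subset hx)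
    have m2 : ∀ x ∈ s2, _ := fun x hx => (word_mem _ _ _).1 (h2.subset hx)
    rcases s1 with _ | ⟨x1, _ | ⟨x2, _ | ⟨x3, s1⟩⟩⟩ <;> rcases h with h | h <;>
      simp at h <;> simp at m1 m2
    · subst h; exact hr _ _ _ _ h2
    · obtain ⟨rfl, rfl⟩ := h; simp at m2; omega
    · obtain ⟨rfl, rfl⟩ := h; simp at m2; omega
    · obtain ⟨rfl, rfl, rfl⟩ := h; simp at m2; omega
    · obtain ⟨rfl, rfl, rfl⟩ := h; simp at m2; omega
    · obtain ⟨rfl, rfl, rfl, rfl⟩ := h; omega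
    · obtain ⟨rfl, rfl, rfl, rfl, rfl⟩ := h; exact hl _ _ _ _ h1

lemma exists_word : ∀ (n : ℕ) (w : List ℕ) (o : ℕ), w.Perm (List.range' o n) → Av w →
    ∃ t : T, t.numNodes = n ∧ word t o = w := by
  intro n
  induction n using Nat.strong_induction_on with
  | _ n ih =>
  intro w o hw hav
  cases n with
  | zero =>
    have : w = [] := by simpa using hw
    exact ⟨.nil, rfl, by simp [word, this]⟩
  | succ n =>
    have hM : o + n ∈ w := by rw [hw.mem_iff]; simp
    obtain ⟨u, v, rfl⟩ := List.append_of_mem hM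
    have hnd : (u ++ (o+n) :: v).Nodup := hw.nodup_iff.2 List.nodup_range'
    have hlt : ∀ x ∈ u ++ v, x < o + n := by
      intro x hx
      have h1 : x ∈ List.range' o (n+1) := by
        rw [← hw.mem_iff]; simp at hx ⊢; tauto
      have h2 : x ≠ o + n := by
        rintro rfl
        have := List.nodup_middle.1 hnd
        rw [List.nodup_cons] at this
        exact this.1 hx
      simp at h1; omega
    have huv : ∀ x ∈ u, ∀ y ∈ v, y < x := by
      intro x hx y hy
      have hs : [x, o+n, y].Sublist (u ++ (o+n) :: v) := by
        have h1 : [x].Sublist u := by simpa using hx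
        have h2 : [y].Sublist v := by simpa using hy
        exact h1.append (h2.cons_cons (o+n))
      have := hav _ _ _ hs
      have h1 := hlt y (by simp [hy])
      have h2 : x ≠ y := by
        have := (List.nodup_append.1 hnd).2.2 x hx y (by simp [hy])
        exact this
      omega
    have hp : (u ++ v).Perm (List.range' o n) := by
      have h1 : (u ++ (o+n) :: v).Perm ((o+n) :: (u ++ v)) := List.perm_middle
      have h2 := h1.symm.trans hw
      rw [List.range'_concat] at h2
      have h3 := h2.trans List.perm_append_comm
      simp only [one_mul, List.singleton_append] at h3
      exact h3.cons_inv
    have hlen : u.length + v.length = n := by simpa using hp.length_eq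
    -- sort
    have key : v.mergeSort ++ u.mergeSort = List.range' o v.length ++ List.range' (o + v.length) u.length := by
      rw [List.range'_append_1, add_comm v.length, hlen]
      apply List.Perm.eq_of_pairwise' (r := (· ≤ ·))
      · rw [List.pairwise_append]
        refine ⟨?_, ?_, ?_⟩
        · simpa using List.pairwise_mergeSort' (r := (· ≤ ·)) v
        · simpa using List.pairwise_mergeSort' (r := (· ≤ ·)) u
        · intro x hx y hy
          simp at hx hy
          exact (huv y hy x hx).le
      · exact List.pairwise_le_range'
      · refine (List.Perm.append (List.mergeSort_perm _ _) (List.mergeSort_perm _ _)).trans ?_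
        exact List.perm_append_comm.trans hp
    obtain ⟨kv, ku⟩ := List.append_inj key (by simp)
    obtain ⟨r, hr, hr'⟩ := ih v.length (by omega) v o
      (by rw [← kv]; exact (List.mergeSort_perm _ _).symm)
      (fun x y z h => hav x y z (h.trans ((List.sublist_cons_self _ _).trans (List.sublist_append_right _ _))))
    obtain ⟨l, hl, hl'⟩ := ih u.length (by omega) u (o + v.length)
      (by rw [← ku]; exact (List.mergeSort_perm _ _).symm)
      (fun x y z h => hav x y z (h.trans (List.sublist_append_left _ _)))
    refine ⟨.node () l r, by simp [numNodes]; omega, ?_⟩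
    rw [word, hr, hl', hr', add_assoc, hl, hlen]

open Classical in
noncomputable def S (P : List ℕ → Prop) (w : List ℕ) : Finset (List ℕ) :=
  w.sublists.toFinset.filter P

lemma mem_S {P w s} : s ∈ S P w ↔ s.Sublist w ∧ P s := by simp [S]

lemma S_card (P Q : List ℕ → Prop) (u v : List ℕ) (M : ℕ) (hnd : (u ++ M :: v).Nodup)
    (h0 : ¬ P [])
    (h1 : ∀ s1 s2, s1.Sublist u → s2.Sublist v → P (s1 ++ s2) → s1 = [] ∨ s2 = [])
    (h2 : ∀ s1 s2, s1.Sublist u → s2.Sublist v → P (s1 ++ M :: s2) → s2 = [])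
    (h3 : ∀ s1, s1.Sublist u → (P (s1 ++ [M]) ↔ Q s1)) :
    (S P (u ++ M :: v)).card = (S P u).card + (S Q u).card + (S P v).card := by
  classical
  have e : S P (u ++ M :: v) = (S P u ∪ (S Q u).image (· ++ [M])) ∪ S P v := by
    ext s
    simp only [Finset.mem_union, Finset.mem_image, mem_S]
    constructor
    · rintro ⟨h, hP⟩
      rw [split_sub] at h
      obtain ⟨s1, s2, hs1, hs2, rfl | rfl⟩ := h
      · rcases h1 s1 s2 hs1 hs2 hP with rfl | rfl
        · right; simpa using ⟨hs2, hP⟩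
        · left; left; simpa using ⟨hs1, by simpa using hP⟩
      · have := h2 s1 s2 hs1 hs2 hP
        subst this
        left; right
        exact ⟨s1, ⟨hs1, (h3 s1 hs1).1 hP⟩, rfl⟩
    · rintro ((⟨h, hP⟩ | ⟨s1, ⟨h, hQ⟩, rfl⟩) | ⟨h, hP⟩)
      · exact ⟨split_sub.2 ⟨s, [], h, by simp, by simp⟩, hP⟩
      · exact ⟨split_sub.2 ⟨s1, [], h, by simp, by simp⟩, (h3 s1 h).2 hQ⟩
      · exact ⟨split_sub.2 ⟨[], s, by simp, h, by simp⟩, hP⟩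
  have hn := List.nodup_middle.1 hnd
  rw [List.nodup_cons] at hn
  rw [List.nodup_append] at hnd
  rw [e, Finset.card_union_of_disjoint, Finset.card_union_of_disjoint, Finset.card_image_of_injective]
  · intro x y h; simpa using h
  · rw [Finset.disjoint_left]
    intro s hs hs'
    simp only [Finset.mem_image, mem_S] at hs hs'
    obtain ⟨s1, _, rfl⟩ := hs'
    exact hn.1 (by simp [hs.1.subset (show M ∈ s1 ++ [M] by simp)])
  · rw [Finset.disjoint_left]
    intro s hs hs'
    simp only [Finset.mem_union, Finset.mem_image, mem_S] at hs hs'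
    cases s with
    | nil => exact h0 hs'.2
    | cons x s =>
      have hxv : x ∈ v := hs'.1.subset (by simp)
      rcases hs with hs | ⟨s1, hs1, hs⟩
      · exact hnd.2.2 x (hs.1.subset (by simp)) x (by simp [hxv]) rfl
      · have hM : M ∈ v := hs'.1.subset (by rw [← hs]; simp)
        exact hn.1 (by simp [hM])

def PA (k : ℕ) (s : List ℕ) : Prop := s.length = k ∧ s.Pairwise (· < ·)
def PB (k : ℕ) (s : List ℕ) : Prop := ∃ y x r, s = y :: x :: r ∧ r.length = k ∧ (x :: y :: r).Pairwise (· < ·)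

lemma node_facts (l r : T) (o : ℕ) : (∀ x ∈ word l (o + r.numNodes), o + r.numNodes ≤ x ∧ x < o + l.numNodes + r.numNodes)
    ∧ (∀ x ∈ word r o, x < o + r.numNodes) := by
  refine ⟨fun x hx => ?_, fun x hx => ?_⟩ <;> rw [word_mem] at hx <;> omega

lemma card_PA0 (w : List ℕ) : (S (PA 0) w).card = 1 := by
  rw [Finset.card_eq_one]
  refine ⟨[], ?_⟩
  ext s
  simp only [mem_S, PA, Finset.mem_singleton, List.length_eq_zero_iff]
  constructor
  · tauto
  · rintro rfl; simp

lemma card_PA (t : T) : ∀ k o, (S (PA k) (word t o)).card = a k t := by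
  induction t with
  | nil =>
    intro k o
    cases k with
    | zero => rw [card_PA0, a_zero]
    | succ k =>
    rw [a_nil, Finset.card_eq_zero, Finset.eq_empty_iff_forall_notMem]
    intro s hs
    simp only [mem_S, PA, word, List.sublist_nil] at hs
    obtain ⟨rfl, h⟩ := hs
    simp at h
  | node u l r hl hr =>
    intro k o
    cases k with
    | zero => rw [card_PA0, a_zero]
    | succ k =>
    obtain ⟨f1, f2⟩ := node_facts l r o
    have hnd := word_nodup (.node u l r) o
    rw [word] at hnd ⊢
    rw [S_card (PA (k+1)) (PA k) _ _ _ hnd, hl, hr, hl, a_node]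
    · simp [PA]
    · rintro s1 s2 h1 h2 ⟨-, hP⟩
      rw [List.pairwise_append] at hP
      cases s1 with
      | nil => simp
      | cons x s1 =>
      cases s2 with
      | nil => simp
      | cons y s2 =>
        have := hP.2.2 x (by simp) y (by simp)
        have := f1 x (h1.subset (by simp))
        have := f2 y (h2.subset (by simp))
        omega
    · rintro s1 s2 h1 h2 ⟨-, hP⟩
      rw [List.pairwise_append] at hP
      cases s2 with
      | nil => simp
      | cons y s2 =>
        have := hP.2.1
        simp at this
        have := f2 y (h2.subset (by simp))
        omega
    · intro s1 h1
      simp only [PA, List.length_append, List.length_singleton, List.pairwise_append]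
      have : ∀ x ∈ s1, x < o + l.numNodes + r.numNodes := fun x hx => (f1 x (h1.subset hx)).2
      simp
      tauto

lemma PB_zero {s : List ℕ} : PB 0 s ↔ ∃ y x, s = [y, x] ∧ x < y := by
  constructor
  · rintro ⟨y, x, r, rfl, hr, h⟩
    rw [List.length_eq_zero_iff] at hr
    subst hr
    exact ⟨y, x, rfl, by simpa using h⟩
  · rintro ⟨y, x, rfl, h⟩
    exact ⟨y, x, [], rfl, rfl, by simpa using h⟩

lemma card_PB_nil (k : ℕ) : (S (PB k) []).card = 0 := by
  rw [Finset.card_eq_zero, Finset.eq_empty_iff_forall_notMem]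
  intro s hs
  simp only [mem_S, PB, List.sublist_nil] at hs
  obtain ⟨rfl, y, x, r, h, _⟩ := hs
  simp at h

lemma S_card0 (u v : List ℕ) (M : ℕ) (hnd : (u ++ M :: v).Nodup)
    (h1 : ∀ x ∈ u, x < M) (h2 : ∀ x ∈ v, x < M) (h3 : ∀ x ∈ u, ∀ y ∈ v, y < x) :
    (S (PB 0) (u ++ M :: v)).card =
      (S (PB 0) u).card + (S (PB 0) v).card + (u.length + 1) * v.length := by
  classical
  have e : S (PB 0) (u ++ M :: v) = (S (PB 0) u ∪ S (PB 0) v) ∪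
      ((u ++ [M]).toFinset ×ˢ v.toFinset).image (fun p => [p.1, p.2]) := by
    ext s
    simp only [Finset.mem_union, Finset.mem_image, mem_S, Finset.mem_product, List.mem_toFinset,
      PB_zero]
    constructor
    · rintro ⟨h, y, x, rfl, hxy⟩
      rw [split_sub] at h
      obtain ⟨s1, s2, hs1, hs2, h⟩ := h
      rcases s1 with _ | ⟨x1, _ | ⟨x2, s1⟩⟩ <;> rcases h with h | h <;> simp at h
      · subst h; exact .inl (.inr ⟨hs2, _, _, rfl, hxy⟩)
      · obtain ⟨rfl, rfl⟩ := h
        exact .inr ⟨(y, x), ⟨by simp, by simpa using hs2⟩, rfl⟩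
      · obtain ⟨rfl, rfl⟩ := h
        exact .inr ⟨(y, x), ⟨by simp at hs1; simp [hs1], by simpa using hs2⟩, rfl⟩
      · obtain ⟨rfl, rfl, rfl⟩ := h
        have := h1 y (by simpa using hs1)
        omega
      · obtain ⟨rfl, rfl, rfl, rfl⟩ := h
        exact .inl (.inl ⟨hs1, _, _, rfl, hxy⟩)
    · rintro ((⟨h, hP⟩ | ⟨h, hP⟩) | ⟨⟨y, x⟩, ⟨hy, hx⟩, rfl⟩)
      · exact ⟨split_sub.2 ⟨s, [], h, by simp, by simp⟩, hP⟩
      · exact ⟨split_sub.2 ⟨[], s, by simp, h, by simp⟩, hP⟩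
      · simp only [List.mem_append, List.mem_singleton] at hy hx ⊢
        rcases hy with hy | rfl
        · exact ⟨split_sub.2 ⟨[y], [x], by simpa using hy, by simpa using hx, by simp⟩,
            y, x, rfl, h3 _ hy _ hx⟩
        · exact ⟨split_sub.2 ⟨[], [x], by simp, by simpa using hx, by simp⟩,
            y, x, rfl, h2 _ hx⟩
  have hd := List.nodup_append.1 hnd
  have hd2 := List.nodup_cons.1 hd.2.1
  rw [e, Finset.card_union_of_disjoint, Finset.card_union_of_disjoint,
    Finset.card_image_of_injective, Finset.card_product, List.toFinset_card_of_nodup,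
    List.toFinset_card_of_nodup]
  · simp
  · exact hd2.2
  · rw [List.nodup_append]
    refine ⟨hd.1, by simp, ?_⟩
    intro x hx y hy
    simp at hy
    subst hy
    exact (h1 x hx).ne
  · rintro ⟨x, y⟩ ⟨x', y'⟩ h; simpa using h
  · rw [Finset.disjoint_left]
    intro s hs hs'
    simp only [mem_S, PB_zero] at hs hs'
    obtain ⟨h, y, x, rfl, -⟩ := hs
    exact (h3 y (h.subset (by simp)) y (hs'.1.subset (by simp))).false
  · rw [Finset.disjoint_left]
    intro s hs hs'
    simp only [Finset.mem_union, Finset.mem_image, Finset.mem_product, List.mem_toFinset, mem_S] at hs hs'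
    obtain ⟨⟨y, x⟩, ⟨hy, hx⟩, rfl⟩ := hs'
    simp only at hx hy hs
    rcases hs with ⟨h, -⟩ | ⟨h, -⟩
    · exact (h3 x (h.subset (by simp)) x hx).false
    · have hv : y ∈ v := h.subset (by simp)
      simp only [List.mem_append, List.mem_singleton] at hy
      rcases hy with hy | rfl
      · exact (h3 y hy y hv).false
      · exact (h2 y hv).false

lemma card_PB (t : T) : ∀ k o, (S (PB k) (word t o)).card = b k t := by
  induction t with
  | nil => intro k o; rw [word, card_PB_nil, b_nil]
  | node u l r hl hr =>
    intro k o
    obtain ⟨f1, f2⟩ := node_facts l r o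
    have hnd := word_nodup (.node u l r) o
    rw [word] at hnd ⊢
    cases k with
    | zero =>
      rw [S_card0 _ _ _ hnd, hl, hr, b_node0, word_length, word_length, a_one, a_one]
      · exact fun x hx => (f1 x hx).2
      · exact fun x hx => by have := f2 x hx; omega
      · exact fun x hx y hy => by have := f1 x hx; have := f2 y hy; omega
    | succ k =>
    rw [S_card (PB (k+1)) (PB k) _ _ _ hnd, hl, hr, hl, b_node]
    · simp [PB]
    · rintro s1 s2 h1 h2 ⟨y, x, w, e, hw, hP⟩
      by_contra hne
      push Not at hne
      obtain ⟨hn1, hn2⟩ := hne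
      -- the last element exceeds the first
      obtain ⟨s2', z, rfl⟩ := List.eq_nil_or_concat'  s2 |>.resolve_left hn2
      obtain ⟨y', s1', rfl⟩ := List.exists_cons_of_ne_nil hn1
      obtain ⟨w', z', rfl⟩ := List.eq_nil_or_concat'  w |>.resolve_left (by rintro rfl; simp at hw)
      have e1 : (y' :: s1' ++ s2') ++ [z] = (y :: x :: w') ++ [z'] := by simpa using e
      obtain ⟨e2, e3⟩ := List.append_inj' e1 rfl
      simp at e2 e3
      obtain ⟨rfl, -⟩ := e2
      subst e3
      have g1 := f1 y' (h1.subset (by simp))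
      have g2 := f2 z (h2.subset (by simp))
      rw [List.pairwise_cons, List.pairwise_cons] at hP
      have := hP.2.1 z (by simp)
      omega
    · rintro s1 s2 h1 h2 ⟨y, x, w, e, hw, hP⟩
      by_contra hn2
      obtain ⟨s2', z, rfl⟩ := List.eq_nil_or_concat'  s2 |>.resolve_left hn2
      obtain ⟨w', z', rfl⟩ := List.eq_nil_or_concat'  w |>.resolve_left (by rintro rfl; simp at hw)
      have e1 : (s1 ++ (o + l.numNodes + r.numNodes) :: s2') ++ [z] = (y :: x :: w') ++ [z'] := by simpa using e
      obtain ⟨e2, e3⟩ := List.append_inj' e1 rfl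
      simp only [List.cons.injEq, and_true] at e3
      subst e3
      have g2 := f2 z (h2.subset (by simp))
      have hM : o + l.numNodes + r.numNodes ∈ y :: x :: w' := by rw [← e2]; simp
      have : o + l.numNodes + r.numNodes < z := by
        have h' : ((x :: y :: w') ++ [z]).Pairwise (· < ·) := by simpa using hP
        rw [List.pairwise_append] at h'
        refine h'.2.2 _ ?_ z (by simp)
        simp at hM ⊢
        tauto
      omega
    · intro s1 h1
      have hlt : ∀ x ∈ s1, x < o + l.numNodes + r.numNodes := fun x hx => (f1 x (h1.subset hx)).2
      constructor
      · rintro ⟨y, x, w, e, hw, hP⟩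
        obtain ⟨w', z', rfl⟩ := List.eq_nil_or_concat'  w |>.resolve_left (by rintro rfl; simp at hw)
        have e1 : s1 ++ [o + l.numNodes + r.numNodes] = (y :: x :: w') ++ [z'] := by simpa using e
        obtain ⟨e2, e3⟩ := List.append_inj' e1 rfl
        refine ⟨y, x, w', e2, by simpa using hw, ?_⟩
        have h' : ((x :: y :: w') ++ [z']).Pairwise (· < ·) := by simpa using hP
        exact (List.pairwise_append.1 h').1
      · rintro ⟨y, x, w, rfl, hw, hP⟩
        refine ⟨y, x, w ++ [o + l.numNodes + r.numNodes], by simp, by simp [hw], ?_⟩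
        have h' : ((x :: y :: w) ++ [o + l.numNodes + r.numNodes]).Pairwise (· < ·) := by
          rw [List.pairwise_append]
          refine ⟨hP, by simp, ?_⟩
          intro c hc d hd
          simp only [List.mem_singleton] at hd
          subst hd
          apply hlt
          simp at hc ⊢
          tauto
        simpa using h'

def W {n : ℕ} (π : Equiv.Perm (Fin n)) : List ℕ := List.ofFn (fun i => (π i : ℕ))

lemma W_inj {n : ℕ} : Function.Injective (W (n := n)) := by
  intro π σ h
  have := List.ofFn_injective h
  ext i
  exact congrFun this i

lemma W_perm {n : ℕ} (π : Equiv.Perm (Fin n)) : (W π).Perm (List.range' 0 n) := by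
  have hnd : (W π).Nodup := by
    unfold W
    rw [List.nodup_ofFn]
    exact Fin.val_injective.comp π.injective
  rw [List.perm_ext_iff_of_nodup hnd List.nodup_range']
  intro x
  simp only [W, List.mem_ofFn, List.mem_range'_1, zero_add, Nat.zero_le, true_and]
  constructor
  · rintro ⟨i, rfl⟩; exact (π i).2
  · intro hx; exact ⟨π.symm ⟨x, hx⟩, by simp⟩

lemma exists_W {n : ℕ} (w : List ℕ) (hl : w.length = n) (hnd : w.Nodup) (hm : ∀ x ∈ w, x < n) :
    ∃ π : Equiv.Perm (Fin n), W π = w := by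
  subst hl
  let f : Fin w.length → Fin w.length := fun i => ⟨w.get i, hm _ (List.get_mem _ _)⟩
  have hf : Function.Injective f := by
    intro i j h
    exact List.nodup_iff_injective_get.1 hnd (Fin.mk.inj_iff.1 h)
  refine ⟨Equiv.ofBijective f (Finite.injective_iff_bijective.1 hf), ?_⟩
  simp only [W, Equiv.ofBijective_apply, f]
  exact List.ofFn_get w

lemma sub_ofFn {n : ℕ} (h : Fin n → ℕ) (s : List ℕ) {k : ℕ} (hk : s.length = k) :
    s.Sublist (List.ofFn h) ↔ ∃ f : Fin k → Fin n, StrictMono f ∧ s = List.ofFn (fun i => h (f i)) := by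
  subst hk
  rw [List.sublist_iff_exists_fin_orderEmbedding_get_eq]
  constructor
  · rintro ⟨f, hf⟩
    refine ⟨fun i => Fin.cast (by simp) (f i), fun i j hij => ?_, ?_⟩
    · have := f.strictMono hij
      simpa using this
    · conv_lhs => rw [← List.ofFn_get s]
      congr 1
      funext i
      rw [hf]
      simp
      rfl
  · rintro ⟨f, hf, e⟩
    refine ⟨OrderEmbedding.ofStrictMono (fun i => Fin.cast (by simp) (f i)) ?_, ?_⟩
    · intro i j hij
      exact hf hij
    · intro i
      have : s.get i = (List.ofFn (fun i => h (f i))).get (Fin.cast (by simp) i) := by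
        simp only [List.get_eq_getElem]
        exact List.getElem_of_eq e _
      rw [this]
      simp
      rfl

section
variable {k n : ℕ} (τ : Equiv.Perm (Fin k)) (P : List ℕ → Prop)
  (hlen : ∀ s, P s → s.length = k)
  (hP : ∀ g : Fin k → ℕ, P (List.ofFn g) ↔ ∀ x y, τ x < τ y ↔ g x < g y)
  (π : Equiv.Perm (Fin n))

def psi (f : Fin k → Fin n) : List ℕ := List.ofFn (fun x => (π (f x) : ℕ))

lemma psi_inj : Function.Injective (psi (k := k) π) := by
  intro f g h
  have := List.ofFn_injective h
  funext i
  exact π.injective (Fin.val_injective (congrFun this i))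

lemma occ_iff (f : Fin k → Fin n) (hP : ∀ g : Fin k → ℕ, P (List.ofFn g) ↔ ∀ x y, τ x < τ y ↔ g x < g y)
    (h : IsOccurrence τ π f) : psi π f ∈ S P (W π) := by
  rw [mem_S]
  refine ⟨(sub_ofFn _ _ (by simp [psi])).2 ⟨f, h.1, rfl⟩, ?_⟩
  rw [psi, hP]
  exact h.2

lemma occ_surj (hlen : ∀ s, P s → s.length = k)
    (hP : ∀ g : Fin k → ℕ, P (List.ofFn g) ↔ ∀ x y, τ x < τ y ↔ g x < g y) (s : List ℕ)
    (h : s ∈ S P (W π)) : ∃ f, IsOccurrence τ π f ∧ psi π f = s := by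
  rw [mem_S] at h
  obtain ⟨f, hf, e⟩ := (sub_ofFn _ _ (hlen s h.2)).1 h.1
  refine ⟨f, ⟨hf, ?_⟩, e.symm⟩
  have := h.2
  rw [e, hP] at this
  exact this

lemma contains_iff (hlen : ∀ s, P s → s.length = k)
    (hP : ∀ g : Fin k → ℕ, P (List.ofFn g) ↔ ∀ x y, τ x < τ y ↔ g x < g y) :
    ¬ Contains τ π ↔ (S P (W π)).card = 0 := by
  rw [Finset.card_eq_zero, Finset.eq_empty_iff_forall_notMem]
  constructor
  · intro h s hs
    obtain ⟨f, hf, -⟩ := occ_surj τ P π hlen hP s hs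
    exact h ⟨f, hf⟩
  · rintro h ⟨f, hf⟩
    exact h _ (occ_iff τ P π f hP hf)

lemma once_iff (hlen : ∀ s, P s → s.length = k)
    (hP : ∀ g : Fin k → ℕ, P (List.ofFn g) ↔ ∀ x y, τ x < τ y ↔ g x < g y) :
    ContainsOnce τ π ↔ (S P (W π)).card = 1 := by
  rw [Finset.card_eq_one]
  constructor
  · rintro ⟨f, hf, hu⟩
    refine ⟨psi π f, ?_⟩
    ext s
    rw [Finset.mem_singleton]
    constructor
    · intro hs
      obtain ⟨g, hg, rfl⟩ := occ_surj τ P π hlen hP s hs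
      rw [hu g hg]
    · rintro rfl
      exact occ_iff τ P π f hP hf
  · rintro ⟨s, hs⟩
    obtain ⟨f, hf, e⟩ := occ_surj τ P π hlen hP s (by simp [hs])
    refine ⟨f, hf, fun g hg => ?_⟩
    have := occ_iff τ P π g hP hg
    rw [hs, Finset.mem_singleton, ← e] at this
    exact psi_inj π this
end

lemma PA_spec (k : ℕ) (g : Fin k → ℕ) : PA k (List.ofFn g) ↔
    ∀ x y, (1 : Equiv.Perm (Fin k)) x < (1 : Equiv.Perm (Fin k)) y ↔ g x < g y := by
  simp only [PA, List.length_ofFn, true_and, List.pairwise_ofFn, Equiv.Perm.coe_one, id]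
  constructor
  · intro h x y
    exact (StrictMono.lt_iff_lt (f := g) (fun i j hij => h hij)).symm
  · intro h i j hij
    exact (h i j).1 hij

lemma PB_spec (m : ℕ) (g : Fin (m+3) → ℕ) : PB (m+1) (List.ofFn g) ↔
    ∀ x y, (Equiv.swap (0 : Fin (m+3)) 1) x < (Equiv.swap (0 : Fin (m+3)) 1) y ↔ g x < g y := by
  set τ := Equiv.swap (0 : Fin (m+3)) 1 with hτ
  have e1 : PB (m+1) (List.ofFn g) ↔ PA (m+3) (List.ofFn (g ∘ τ)) := by
    have h1 : List.ofFn g = g 0 :: g 1 :: List.ofFn (fun i : Fin (m+1) => g i.succ.succ) := by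
      rw [List.ofFn_succ, List.ofFn_succ]; rfl
    have h2 : List.ofFn (g ∘ τ) = g 1 :: g 0 :: List.ofFn (fun i : Fin (m+1) => g i.succ.succ) := by
      rw [List.ofFn_succ, List.ofFn_succ]
      have t0 : τ 0 = 1 := Equiv.swap_apply_left _ _
      have t1 : τ (Fin.succ 0) = 0 := Equiv.swap_apply_right _ _
      have t2 : ∀ i : Fin (m+1), τ i.succ.succ = i.succ.succ := fun i =>
        Equiv.swap_apply_of_ne_of_ne (by simp) (by
          intro h
          have := congrArg Fin.val h
          simp at this)
      simp only [Function.comp, t0, t1, t2]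
    rw [h1, h2]
    constructor
    · rintro ⟨y, x, r, e, hr, h⟩
      simp only [List.cons.injEq] at e
      obtain ⟨rfl, rfl, rfl⟩ := e
      exact ⟨by simp, h⟩
    · rintro ⟨-, h⟩
      exact ⟨_, _, _, rfl, by simp, h⟩
  rw [e1, PA_spec]
  have tt : ∀ x, τ (τ x) = x := fun x => Equiv.swap_apply_self _ _ x
  simp only [Equiv.Perm.coe_one, id, Function.comp]
  constructor
  · intro h x y
    have := h (τ x) (τ y)
    rwa [tt, tt] at this
  · intro h x y
    have := h (τ x) (τ y)
    rwa [tt, tt] at this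

lemma PA_len (k : ℕ) (s) (h : PA k s) : s.length = k := h.1
lemma PB_len (k : ℕ) (s) (h : PB (k+1) s) : s.length = k + 3 := by
  obtain ⟨y, x, r, rfl, hr, -⟩ := h
  simp [hr]

def P132 (s : List ℕ) : Prop := ∃ x y z, s = [x, y, z] ∧ x < z ∧ z < y

lemma P132_spec (g : Fin 3 → ℕ) : P132 (List.ofFn g) ↔ ∀ x y, p132 x < p132 y ↔ g x < g y := by
  have e : P132 (List.ofFn g) ↔ g 0 < g 2 ∧ g 2 < g 1 := by
    have : List.ofFn g = [g 0, g 1, g 2] := by simp [List.ofFn_succ]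
    rw [this]
    constructor
    · rintro ⟨x, y, z, h, h'⟩
      simp only [List.cons.injEq, and_true] at h
      obtain ⟨rfl, rfl, rfl⟩ := h
      exact h'
    · intro h
      exact ⟨_, _, _, rfl, h⟩
  have t0 : p132 0 = 0 := rfl
  have t1 : p132 1 = 2 := rfl
  have t2 : p132 2 = 1 := rfl
  rw [e]
  constructor
  · intro h x y
    fin_cases x <;> fin_cases y <;> simp [t0, t1, t2] <;> omega
  · intro h
    have h1 := (h 0 2).1 (by rw [t0, t2]; decide)
    have h2 := (h 2 1).1 (by rw [t1, t2]; decide)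
    exact ⟨h1, h2⟩

lemma av_iff {n : ℕ} (π : Equiv.Perm (Fin n)) : ¬ Contains p132 π ↔ Av (W π) := by
  rw [contains_iff p132 P132 π (by rintro s ⟨x, y, z, rfl, -⟩; rfl) P132_spec, Finset.card_eq_zero,
    Finset.eq_empty_iff_forall_notMem]
  constructor
  · intro h x y z hs hc
    exact h [x, y, z] (mem_S.2 ⟨hs, x, y, z, rfl, hc⟩)
  · intro h s hs
    rw [mem_S] at hs
    obtain ⟨hs, x, y, z, rfl, hc⟩ := hs
    exact h x y z hs hc

lemma count (n : ℕ) (Q : Equiv.Perm (Fin n) → Prop) (R : List ℕ → Prop)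
    (h : ∀ π, Q π ↔ Av (W π) ∧ R (W π)) :
    ((Nat.card {π : Equiv.Perm (Fin n) // Q π} : ℕ) : ℚ) =
      ∑ t ∈ treesOfNumNodesEq n, I (fun t => R (word t 0)) t := by
  classical
  have e : ∑ t ∈ treesOfNumNodesEq n, I (fun t => R (word t 0)) t =
      (((treesOfNumNodesEq n).filter (fun t => R (word t 0))).card : ℚ) := by
    unfold I
    rw [Finset.sum_boole]
  rw [e, Nat.cast_inj]
  have h1 : Nat.card {π : Equiv.Perm (Fin n) // Q π} = (W '' {π | Q π}).ncard := by
    rw [Set.ncard_image_of_injective _ W_inj]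
    rfl
  have h2 : ((treesOfNumNodesEq n).filter (fun t => R (word t 0))).card =
      ((fun t => word t 0) '' {t : T | t.numNodes = n ∧ R (word t 0)}).ncard := by
    rw [Set.ncard_image_of_injective _ (fun t t' h => word_inj t t' 0 h), ← Set.ncard_coe_finset]
    congr 1
    ext t
    simp [mem_treesOfNumNodesEq]
  rw [h1, h2]
  congr 1
  ext w
  simp only [Set.mem_image, Set.mem_ofPred_eq]
  constructor
  · rintro ⟨π, hπ, rfl⟩
    rw [h] at hπ
    obtain ⟨t, ht, e⟩ := exists_word n (W π) 0 (W_perm π) hπ.1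
    exact ⟨t, ⟨ht, e ▸ hπ.2⟩, e⟩
  · rintro ⟨t, ⟨ht, hR⟩, rfl⟩
    obtain ⟨π, hπ⟩ := exists_W (n := n) (word t 0) (by rw [word_length, ht]) (word_nodup t 0)
      (fun x hx => by rw [word_mem] at hx; omega)
    exact ⟨π, (h π).2 (by rw [hπ]; exact ⟨word_av t 0, hR⟩), hπ⟩

end S16

/-- Write `k = m + 3 ≥ 3`. Let `12⋯k` be the identity of `S_k` and
`213⋯k = swap 0 1` (zero-indexed). With `q_{k−1} = p_{k−1} − X²·p_{k−3}` (and
`pU (m+1) = p_m`), the generating functions `F₁` (avoid `132` and `12⋯k`, contain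
`213⋯k` exactly once) and `F₂` (avoid `132` and `213⋯k`, contain `12⋯k` exactly once)
satisfy `F₁·q_{k−1}² = X^k` and `F₂·q_{k−1}² = X^k`. -/
theorem stmt16 (m : ℕ) :
    (PowerSeries.mk fun n => ((Nat.card {π : Equiv.Perm (Fin n) //
        ¬ Contains p132 π ∧ ¬ Contains (1 : Equiv.Perm (Fin (m + 3))) π ∧
          ContainsOnce (Equiv.swap (0 : Fin (m + 3)) 1) π} : ℕ) : ℚ))
      * ((pU (m + 3) : PowerSeries ℚ)
          - PowerSeries.X ^ 2 * (pU (m + 1) : PowerSeries ℚ)) ^ 2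
      = PowerSeries.X ^ (m + 3)
    ∧
    (PowerSeries.mk fun n => ((Nat.card {π : Equiv.Perm (Fin n) //
        ¬ Contains p132 π ∧ ¬ Contains (Equiv.swap (0 : Fin (m + 3)) 1) π ∧
          ContainsOnce (1 : Equiv.Perm (Fin (m + 3))) π} : ℕ) : ℚ))
      * ((pU (m + 3) : PowerSeries ℚ)
          - PowerSeries.X ^ 2 * (pU (m + 1) : PowerSeries ℚ)) ^ 2
      = PowerSeries.X ^ (m + 3) := by
  constructor
  · have e : (PowerSeries.mk fun n => ((Nat.card {π : Equiv.Perm (Fin n) //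
        ¬ Contains p132 π ∧ ¬ Contains (1 : Equiv.Perm (Fin (m + 3))) π ∧
          ContainsOnce (Equiv.swap (0 : Fin (m + 3)) 1) π} : ℕ) : ℚ)) = S16.F1 (m+1) := by
      ext n
      rw [S16.F1, S16.gf, PowerSeries.coeff_mk, PowerSeries.coeff_mk]
      rw [S16.count n _ (fun w => (S16.S (S16.PA (m+3)) w).card = 0 ∧ (S16.S (S16.PB (m+1)) w).card = 1)]
      · simp only [S16.card_PA, S16.card_PB]
      · intro π
        rw [S16.av_iff, S16.contains_iff _ _ π (S16.PA_len _) (S16.PA_spec _),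
          S16.once_iff _ _ π (S16.PB_len _) (S16.PB_spec _)]
    rw [e]
    exact S16.F_main S16.F1 S16.F1_zero S16.F1_succ (m+1)
  · have e : (PowerSeries.mk fun n => ((Nat.card {π : Equiv.Perm (Fin n) //
        ¬ Contains p132 π ∧ ¬ Contains (Equiv.swap (0 : Fin (m + 3)) 1) π ∧
          ContainsOnce (1 : Equiv.Perm (Fin (m + 3))) π} : ℕ) : ℚ)) = S16.F2 (m+1) := by
      ext n
      rw [S16.F2, S16.gf, PowerSeries.coeff_mk, PowerSeries.coeff_mk]
      rw [S16.count n _ (fun w => (S16.S (S16.PB (m+1)) w).card = 0 ∧ (S16.S (S16.PA (m+3)) w).card = 1)]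
      · simp only [S16.card_PA, S16.card_PB]
      · intro π
        rw [S16.av_iff, S16.contains_iff _ _ π (S16.PB_len _) (S16.PB_spec _),
          S16.once_iff _ _ π (S16.PA_len _) (S16.PA_spec _)]
    rw [e]
    exact S16.F_main S16.F2 S16.F2_zero S16.F2_succ (m+1)
end
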